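/- Let p ≥ q ≥ 1 and n = p + q. For λ = (λ₁ ≥ … ≥ λ_n) ∈ ℝⁿ and s = (s₁ ≥ … ≥ s_q ≥ 0) ∈ ℝ^q, the pair (λ, s) belongs to A(p,q) (i.e. there exists an n×n Hermitian matrix X with e(X) = λ and s(X₁₂) = s) if and only if (λ, λ*, 2·ŝ^{p,q}) ∈ Horn(n). -/

import Mathlib

open Matrix

/-- Eigenvalues of a (Hermitian) complex matrix, listed in decreasing order. -/
noncomputable def eigVec {k : ℕ} (X : Matrix (Fin k) (Fin k) ℂ) (hX : X.IsHermitian) :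
    Fin k → ℝ :=
  fun i => hX.eigenvalues (Tuple.sort hX.eigenvalues i.rev)

/-- The `i`-th (0-based) singular value of a rectangular complex matrix:
the square root of the `i`-th largest eigenvalue of `Y * Yᴴ` (and `0` for `i ≥ a`). -/
noncomputable def sval {a b : ℕ} (Y : Matrix (Fin a) (Fin b) ℂ) (i : ℕ) : ℝ :=
  if h : i < a then
    Real.sqrt (eigVec (Y * Yᴴ) (Matrix.isHermitian_mul_conjTranspose_self Y) ⟨i, h⟩)
  else 0

/-- The Horn cone `Horn(k)`. -/
def Horn (k : ℕ) : Set ((Fin k → ℝ) × (Fin k → ℝ) × (Fin k → ℝ)) :=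
  { v | ∃ (X Y : Matrix (Fin k) (Fin k) ℂ) (hX : X.IsHermitian) (hY : Y.IsHermitian),
      v.1 = eigVec X hX ∧ v.2.1 = eigVec Y hY ∧ v.2.2 = eigVec (X + Y) (hX.add hY) }

/-- The Littlewood–Richardson cone `LR(m,n)`. -/
def LRcone (m n : ℕ) : Set ((Fin (m + n) → ℝ) × (Fin m → ℝ) × (Fin n → ℝ)) :=
  { v | ∃ (M : Matrix (Fin (m + n)) (Fin (m + n)) ℂ) (hM : M.IsHermitian),
      v.1 = eigVec M hM ∧
      v.2.1 = eigVec (M.submatrix (Fin.castAdd n) (Fin.castAdd n))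
        (hM.submatrix (Fin.castAdd n)) ∧
      v.2.2 = eigVec (M.submatrix (Fin.natAdd m) (Fin.natAdd m))
        (hM.submatrix (Fin.natAdd m)) }

/-- Top-left `p × p` block. -/
def blockTL (p q : ℕ) (X : Matrix (Fin (p + q)) (Fin (p + q)) ℂ) : Matrix (Fin p) (Fin p) ℂ :=
  X.submatrix (Fin.castAdd q) (Fin.castAdd q)

/-- Top-right `p × q` block. -/
def blockTR (p q : ℕ) (X : Matrix (Fin (p + q)) (Fin (p + q)) ℂ) : Matrix (Fin p) (Fin q) ℂ :=
  X.submatrix (Fin.castAdd q) (Fin.natAdd p)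

/-- Bottom-left `q × p` block. -/
def blockBL (p q : ℕ) (X : Matrix (Fin (p + q)) (Fin (p + q)) ℂ) : Matrix (Fin q) (Fin p) ℂ :=
  X.submatrix (Fin.natAdd p) (Fin.castAdd q)

/-- Bottom-right `q × q` block. -/
def blockBR (p q : ℕ) (X : Matrix (Fin (p + q)) (Fin (p + q)) ℂ) : Matrix (Fin q) (Fin q) ℂ :=
  X.submatrix (Fin.natAdd p) (Fin.natAdd p)

/-- `λ* = (−λ_k, …, −λ_1)`. -/
def starVec {k : ℕ} (x : Fin k → ℝ) : Fin k → ℝ := fun i => -x i.rev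

/-- `ŝ^{p,q} = (s₁, …, s_q, 0, …, 0, −s_q, …, −s₁) ∈ ℝ^{p+q}` (with `p − q` middle zeros). -/
noncomputable def hatPQ (p q : ℕ) (s : Fin q → ℝ) : Fin (p + q) → ℝ :=
  fun i =>
    if h : (i : ℕ) < q then s ⟨i, h⟩
    else if h' : (i : ℕ) < p then 0
    else -s ⟨p + q - 1 - i, by have := i.isLt; omega⟩

/-- The cone `A(p,q)`: pairs `(e(X), s(X₁₂))` for `X` Hermitian of size `p+q`. -/
def coneA (p q : ℕ) : Set ((Fin (p + q) → ℝ) × (Fin q → ℝ)) :=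
  { v | ∃ (X : Matrix (Fin (p + q)) (Fin (p + q)) ℂ) (hX : X.IsHermitian),
      v.1 = eigVec X hX ∧ ∀ i : Fin q, v.2 i = sval (blockTR p q X) (i : ℕ) }

/-- The cone `S(p,q)`: triples `(s(X), s(X₁₂), s(X₂₁))`. -/
def coneS (p q : ℕ) : Set ((Fin (p + q) → ℝ) × (Fin q → ℝ) × (Fin q → ℝ)) :=
  { v | ∃ X : Matrix (Fin (p + q)) (Fin (p + q)) ℂ,
      (∀ i : Fin (p + q), v.1 i = sval X (i : ℕ)) ∧
      (∀ i : Fin q, v.2.1 i = sval (blockTR p q X) (i : ℕ)) ∧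
      (∀ i : Fin q, v.2.2 i = sval (blockBL p q X) (i : ℕ)) }

/-- The cone `T(p,q)`: triples `(s(X), s(X₁₁), s(X₂₂))`. -/
def coneT (p q : ℕ) : Set ((Fin (p + q) → ℝ) × (Fin p → ℝ) × (Fin q → ℝ)) :=
  { v | ∃ X : Matrix (Fin (p + q)) (Fin (p + q)) ℂ,
      (∀ i : Fin (p + q), v.1 i = sval X (i : ℕ)) ∧
      (∀ i : Fin p, v.2.1 i = sval (blockTL p q X) (i : ℕ)) ∧
      (∀ i : Fin q, v.2.2 i = sval (blockBR p q X) (i : ℕ)) }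

/-- `μ(A) = (a_r − r ≥ … ≥ a₂ − 2 ≥ a₁ − 1)` as a decreasing real vector, for
`A = {a₁ < … < a_r}` a subset of `[n]` (0-based indexing internally). -/
noncomputable def muVec {n r : ℕ} (A : Finset (Fin n)) (h : A.card = r) : Fin r → ℝ :=
  fun k => (((A.orderIsoOfFin h k.rev : Fin n) : ℕ) : ℝ) - ((k.rev : ℕ) : ℝ)

/-- `A^o = {ℓ + 1 − a : a ∈ A}` inside `[ℓ]`. -/
def opp {n : ℕ} (A : Finset (Fin n)) : Finset (Fin n) := A.image Fin.rev

/-- `|s|_{K ∩ [q]}` where `K ⊆ [n]`, `s ∈ ℝ^q` and `[q]` is viewed inside `[n]`. -/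
noncomputable def sumRestr {n q : ℕ} (s : Fin q → ℝ) (K : Finset (Fin n)) : ℝ :=
  ∑ i ∈ K, (if h : (i : ℕ) < q then s ⟨i, h⟩ else 0)

/-- The augmented matrix `Ŷ^{p,q} = [[0, Y], [Yᴴ, 0]]` of size `p + q`. -/
def hatM (p q : ℕ) (Y : Matrix (Fin p) (Fin q) ℂ) : Matrix (Fin (p + q)) (Fin (p + q)) ℂ :=
  Matrix.reindex finSumFinEquiv finSumFinEquiv (Matrix.fromBlocks 0 Y Yᴴ 0)


/-!
Let `θ` be conjugation by `diag(I_p, -I_q)`. For Hermitian `X` the difference `X - θ X` is twice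
the Hermitian dilation of the off-diagonal block `X₁₂`, and `-θ X` has spectrum `λ*`; this gives
the inclusion in the Horn cone. Conversely, a point of the Horn cone is a relation
`a A a* - b (θ A) b* = S` with `a`, `b` unitary and `θ S = -S`, and the task is to make it
symmetric, with `θ` exchanging the two terms on the left.

Put `X = (A, -θ A, -S)` and minimise `‖∑ vᵢ Xᵢ vᵢ*‖²` over the families of unitaries `v` having
the symmetry. Replace `Xᵢ` by `vᵢ Xᵢ vᵢ*` at a minimum and let `β = ∑ Xᵢ`. The first variation
shows that each `Xᵢ` commutes with `β`. The second variation shows that matrices `zᵢ` which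
strictly raise the eigenvalues of both `Xᵢ` and `β` can only sum to zero if all of them vanish.

By duality, this independence makes the map `(b, r, g) ↦ (bᵢ rᵢ g)ᵢ` submersive at the identity,
where `bᵢ` preserves the spectral flag of `Xᵢ`, `rᵢ` preserves the range of the positive spectral
projection `Q` of `β`, and `g` is an arbitrary matrix common to all `i`. As the map is polynomial,
its image is dense. Gram–Schmidt and compactness then show that, for every unitary family `w`,
some projection `P` of the rank of `Q` satisfies `tr (Q Xᵢ) ≤ tr (P wᵢ Xᵢ wᵢ*)` for all `i`. If
`∑ wᵢ Xᵢ wᵢ* = 0`, then `tr (Q β) ≤ 0` and `tr β = 0`, so `β = 0`.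
-/
section DominantPolynomialMap

open MvPolynomial

theorem exists_basicOpen_subset_of_isConstructible {R : Type*} [CommRing R] [IsDomain R]
    {s : Set (PrimeSpectrum R)} (hs : Topology.IsConstructible s)
    (hbot : (⟨⊥, Ideal.isPrime_bot⟩ : PrimeSpectrum R) ∈ s) :
    ∃ a : R, a ≠ 0 ∧ (PrimeSpectrum.basicOpen a : Set (PrimeSpectrum R)) ⊆ s := by
  obtain ⟨S, rfl⟩ := PrimeSpectrum.exists_constructibleSetData_iff.2 hs
  simp only [PrimeSpectrum.ConstructibleSetData.toSet, Set.mem_iUnion] at hbot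
  obtain ⟨D, hD, hDg, hDf⟩ := hbot
  refine ⟨D.f, fun h0 => hDf (by simp [h0]), fun P hP => ?_⟩
  simp only [PrimeSpectrum.ConstructibleSetData.toSet, Set.mem_iUnion]
  refine ⟨D, hD, (PrimeSpectrum.mem_zeroLocus _ _).2 fun g hg => ?_, ?_⟩
  · have hg0 : g = 0 := by simpa using hDg hg
    simp [hg0]
  · simpa [PrimeSpectrum.mem_zeroLocus] using hP

theorem exists_basicOpen_subset_range_comap {A B : Type*} [CommRing A] [IsDomain A] [CommRing B]
    [IsDomain B] {f : A →+* B} (hf : f.FinitePresentation) (hinj : Function.Injective f) :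
    ∃ a : A, a ≠ 0 ∧
      (PrimeSpectrum.basicOpen a : Set (PrimeSpectrum A)) ⊆ Set.range (PrimeSpectrum.comap f) := by
  refine exists_basicOpen_subset_of_isConstructible (PrimeSpectrum.isConstructible_range_comap hf)
    ⟨⟨⊥, Ideal.isPrime_bot⟩, ?_⟩
  ext z
  simpa only [PrimeSpectrum.comap_asIdeal, Ideal.mem_comap, Ideal.mem_bot] using
    map_eq_zero_iff f hinj

variable {K σ τ : Type*} [Field K]

theorem finitePresentation_aeval [Finite σ] [Finite τ] (f : τ → MvPolynomial σ K) :
    (aeval f : MvPolynomial τ K →ₐ[K] MvPolynomial σ K).toRingHom.FinitePresentation := by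
  refine RingHom.FinitePresentation.of_comp_finiteType (f := C) (g := (aeval f).toRingHom) ?_ ?_
  · have hcomp : (aeval f).toRingHom.comp C = (C : K →+* MvPolynomial σ K) := by
      ext1 z
      simp
    rw [hcomp]
    exact RingHom.finitePresentation_algebraMap.2 inferInstance
  · exact RingHom.finiteType_algebraMap.2 inferInstance

theorem exists_forall_eval_ne_zero_mem_range [IsAlgClosed K] [Finite σ] [Finite τ]
    {f : τ → MvPolynomial σ K}
    (hf : Function.Injective (aeval f : MvPolynomial τ K →ₐ[K] MvPolynomial σ K)) :
    ∃ a : MvPolynomial τ K, a ≠ 0 ∧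
      ∀ y : τ → K, eval y a ≠ 0 → y ∈ Set.range fun (x : σ → K) t => eval x (f t) := by
  obtain ⟨a, ha, hrange⟩ := exists_basicOpen_subset_range_comap (finitePresentation_aeval f) hf
  refine ⟨a, ha, fun y hy => ?_⟩
  obtain ⟨P, hP⟩ := @hrange ⟨RingHom.ker (eval y), RingHom.ker_isPrime _⟩ hy
  obtain ⟨M, hM, hPM⟩ := Ideal.exists_le_maximal P.asIdeal P.isPrime.ne_top
  obtain ⟨x, rfl⟩ := isMaximal_iff_eq_vanishingIdeal_singleton.1 hM
  refine ⟨x, funext fun t => ?_⟩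
  have hker : X t - C (y t) ∈ (PrimeSpectrum.comap (aeval f).toRingHom P).asIdeal := by
    rw [hP]
    simp [RingHom.mem_ker]
  have hxt := (mem_vanishingIdeal_singleton_iff x _).1 (hPM hker)
  simpa [sub_eq_zero] using hxt

variable [Finite τ]

theorem eq_zero_of_eventually_eval_eq_zero {P : MvPolynomial τ ℂ} {y : τ → ℂ}
    (h : ∀ᶠ z in nhds y, eval z P = 0) : P = 0 := by
  cases nonempty_fintype τ
  obtain ⟨ε, hε, hball⟩ := Metric.eventually_nhds_iff.1 h
  refine funext_set (fun i => Metric.ball (y i) ε) (fun i => ?_) (fun z hz => ?_)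
  · exact infinite_of_mem_nhds (y i) (Metric.ball_mem_nhds _ hε)
  · rw [map_zero]
    exact hball ((dist_pi_lt_iff hε).2 fun i => hz i trivial)

theorem dense_eval_ne_zero {P : MvPolynomial τ ℂ} (hP : P ≠ 0) :
    Dense {y : τ → ℂ | eval y P ≠ 0} := by
  intro y
  rw [mem_closure_iff_frequently]
  exact fun h => hP (eq_zero_of_eventually_eval_eq_zero (by simpa using h))

theorem denseRange_eval_of_range_mem_nhds [Finite σ] (f : τ → MvPolynomial σ ℂ) {y : τ → ℂ}
    (h : Set.range (fun (x : σ → ℂ) t => eval x (f t)) ∈ nhds y) :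
    DenseRange (fun (x : σ → ℂ) t => eval x (f t)) := by
  have hinj : Function.Injective (aeval f : MvPolynomial τ ℂ →ₐ[ℂ] MvPolynomial σ ℂ) := by
    refine (injective_iff_map_eq_zero _).2 fun P hP =>
      eq_zero_of_eventually_eval_eq_zero (y := y) ?_
    filter_upwards [h]
    rintro _ ⟨x, rfl⟩
    have hcomp := comp_aeval_apply f (aeval x : _ →ₐ[ℂ] ℂ) P
    rw [hP, map_zero] at hcomp
    simpa [coe_aeval_eq_eval] using hcomp.symm
  obtain ⟨a, ha, hay⟩ := exists_forall_eval_ne_zero_mem_range hinj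
  exact (dense_eval_ne_zero ha).mono hay

end DominantPolynomialMap

section PolynomialMaps

open MvPolynomial

/-- The algebra of complex polynomial functions on a vector space, defined without coordinates:
it is generated by the linear forms. -/
def polyFunctions (V : Type*) [AddCommGroup V] [Module ℂ V] : Subalgebra ℂ (V → ℂ) :=
  Algebra.adjoin ℂ (Set.range fun (φ : Module.Dual ℂ V) v => φ v)

/-- A map between complex vector spaces is polynomial if linear forms on the target pull back to
polynomial functions. -/
def IsPolyMap {V W : Type*} [AddCommGroup V] [Module ℂ V] [AddCommGroup W] [Module ℂ W]
    (f : V → W) : Prop :=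
  ∀ φ : Module.Dual ℂ W, (fun v => φ (f v)) ∈ polyFunctions V

section Algebraic

variable {V W : Type*} [AddCommGroup V] [Module ℂ V] [AddCommGroup W] [Module ℂ W]

theorem isPolyMap_linearMap (f : V →ₗ[ℂ] W) : IsPolyMap f :=
  fun φ => Algebra.subset_adjoin ⟨φ ∘ₗ f, rfl⟩

theorem isPolyMap_pi {κ : Type*} [Finite κ] {f : V → κ → W} (hf : ∀ i, IsPolyMap fun v => f v i) :
    IsPolyMap f := by
  classical
  cases nonempty_fintype κ
  intro φ
  have hsum : (fun v => φ (f v)) =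
      ∑ i, fun v => (φ ∘ₗ LinearMap.single ℂ (fun _ : κ => W) i) (f v i) := by
    ext v
    conv_lhs => rw [← Finset.univ_sum_single (f v)]
    simp
  rw [hsum]
  exact sum_mem fun i _ => hf i _

theorem IsPolyMap.mul {A : Type*} [Ring A] [Algebra ℂ A] [FiniteDimensional ℂ A]
    {f g : V → A} (hf : IsPolyMap f) (hg : IsPolyMap g) : IsPolyMap fun v => f v * g v := by
  intro φ
  set b := Module.finBasis ℂ A
  have hsum : (fun v => φ (f v * g v)) =
      ∑ i, ∑ j, φ (b i * b j) • ((fun v => b.coord i (f v)) * fun v => b.coord j (g v)) := by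
    ext v
    conv_lhs => rw [← b.sum_repr (f v), ← b.sum_repr (g v), Finset.sum_mul_sum]
    simp [mul_comm, mul_left_comm]
  rw [hsum]
  exact sum_mem fun i _ => sum_mem fun j _ =>
    Subalgebra.smul_mem _ (mul_mem (hf (b.coord i)) (hg (b.coord j))) _

theorem exists_eval_eq_of_mem_polyFunctions {σ : Type*} [Finite σ] (b : Module.Basis σ ℂ V)
    {d : V → ℂ} (hd : d ∈ polyFunctions V) :
    ∃ P : MvPolynomial σ ℂ, ∀ x : σ → ℂ, d (b.equivFun.symm x) = eval x P := by
  cases nonempty_fintype σ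
  induction hd using Algebra.adjoin_induction with
  | mem d hd =>
    obtain ⟨φ, rfl⟩ := hd
    exact ⟨∑ s, X s * C (φ (b s)), fun x => by simp [b.equivFun_symm_apply]⟩
  | algebraMap c => exact ⟨C c, fun x => by simp⟩
  | add d e _ _ hd he =>
    obtain ⟨⟨P, hP⟩, Q, hQ⟩ := And.intro hd he
    exact ⟨P + Q, fun x => by rw [Pi.add_apply, hP, hQ, map_add]⟩
  | mul d e _ _ hd he =>
    obtain ⟨⟨P, hP⟩, Q, hQ⟩ := And.intro hd he
    exact ⟨P * Q, fun x => by rw [Pi.mul_apply, hP, hQ, map_mul]⟩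

end Algebraic

variable {V W : Type*} [NormedAddCommGroup V] [NormedSpace ℂ V] [FiniteDimensional ℂ V]
  [NormedAddCommGroup W] [NormedSpace ℂ W] [FiniteDimensional ℂ W] {f : V → W}

theorem continuous_of_mem_polyFunctions {d : V → ℂ} (hd : d ∈ polyFunctions V) :
    Continuous d := by
  induction hd using Algebra.adjoin_induction with
  | mem d hd =>
    obtain ⟨φ, rfl⟩ := hd
    exact φ.continuous_of_finiteDimensional
  | algebraMap c => exact continuous_const
  | add d e _ _ hd he => exact hd.add he
  | mul d e _ _ hd he => exact hd.mul he

theorem IsPolyMap.continuous (hf : IsPolyMap f) : Continuous f := by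
  set b := Module.finBasis ℂ W
  set e : W ≃L[ℂ] (Fin (Module.finrank ℂ W) → ℂ) := b.equivFun.toContinuousLinearEquiv
  exact e.comp_continuous_iff.1 (continuous_pi fun i =>
    continuous_of_mem_polyFunctions (hf (b.coord i)))

theorem IsPolyMap.denseRange_of_surjective_fderiv (hf : IsPolyMap f) {v : V} {f' : V →L[ℂ] W}
    (hf' : HasStrictFDerivAt f f' v) (hsurj : Function.Surjective f') : DenseRange f := by
  set b := Module.finBasis ℂ V
  set e : V ≃L[ℂ] (Fin (Module.finrank ℂ V) → ℂ) := b.equivFun.toContinuousLinearEquiv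
  set b' := Module.finBasis ℂ W
  set e' : W ≃L[ℂ] (Fin (Module.finrank ℂ W) → ℂ) := b'.equivFun.toContinuousLinearEquiv
  choose P hP using fun i => exists_eval_eq_of_mem_polyFunctions b (hf (b'.coord i))
  have hcoord : (fun (x : Fin (Module.finrank ℂ V) → ℂ) i => eval x (P i)) =
      e' ∘ f ∘ e.symm := by
    ext x i
    exact (hP i x).symm
  have hrange : Set.range (e' ∘ f ∘ e.symm) ∈ nhds (e' (f v)) := by
    rw [← Function.comp_assoc, e.symm.surjective.range_comp, Set.range_comp]
    refine e'.toHomeomorph.isOpenMap.image_mem_nhds ?_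
    rw [← hf'.map_nhds_eq_of_surj (LinearMap.range_eq_top.2 hsurj)]
    exact Filter.range_mem_map
  have hdense := denseRange_eval_of_range_mem_nhds P (hcoord ▸ hrange)
  rw [hcoord, DenseRange, ← Function.comp_assoc, e.symm.surjective.range_comp,
    Set.range_comp] at hdense
  exact e'.toHomeomorph.isDenseEmbedding.dense_image.1 hdense

end PolynomialMaps

section DenseProducts

theorem finite_spectrum_of_finiteDimensional {K A : Type*} [Field K] [Ring A] [Algebra K A]
    [FiniteDimensional K A] (a : A) : (spectrum K a).Finite := by
  cases subsingleton_or_nontrivial A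
  · simp [spectrum.of_subsingleton]
  refine (minpoly K a).rootSet_finite K |>.subset fun c hc => ?_
  have hroot := spectrum.subset_polynomial_aeval a (minpoly K a) ⟨c, hc, rfl⟩
  rw [minpoly.aeval, spectrum.zero_eq] at hroot
  simpa [Polynomial.mem_rootSet, minpoly.ne_zero (Algebra.IsIntegral.isIntegral a),
    Polynomial.aeval_def, Polynomial.eval₂_eq_eval_map] using hroot

theorem dense_setOf_isUnit (A : Type*) [NormedRing A] [NormedAlgebra ℂ A] [FiniteDimensional ℂ A] :
    Dense {a : A | IsUnit a} := by
  intro a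
  have hdense : Dense (spectrum ℂ a)ᶜ :=
    (finite_spectrum_of_finiteDimensional a).countable.dense_compl ℂ
  have hcont : Continuous fun c : ℂ => a - algebraMap ℂ A c := by fun_prop
  have hmem := image_closure_subset_closure_image hcont ⟨0, hdense 0, rfl⟩
  simp only [map_zero, sub_zero] at hmem
  refine closure_mono ?_ hmem
  rintro _ ⟨c, hc, rfl⟩
  have hunit := (spectrum.notMem_iff.1 hc).neg
  rwa [neg_sub] at hunit

theorem exists_sub_mem_of_dualAnnihilator {K V κ : Type*} [Field K] [AddCommGroup V] [Module K V]
    [Fintype κ] {N : κ → Submodule K V}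
    (h : ∀ φ : κ → Module.Dual K V, (∀ i, φ i ∈ (N i).dualAnnihilator) → ∑ i, φ i = 0 → φ = 0)
    (m : κ → V) : ∃ g, ∀ i, m i - g ∈ N i := by
  classical
  let P : Submodule K (κ → V) := Submodule.pi Set.univ N ⊔
    LinearMap.range (LinearMap.pi fun _ : κ => (LinearMap.id : V →ₗ[K] V))
  suffices hP : P = ⊤ by
    obtain ⟨x, hx, _, ⟨g, rfl⟩, hxg⟩ := Submodule.mem_sup.1 (hP ▸ Submodule.mem_top : m ∈ P)
    exact ⟨g, fun i => by simpa [← hxg] using hx i trivial⟩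
  rw [← Submodule.dualAnnihilator_eq_bot_iff, eq_bot_iff]
  intro φ hφ
  rw [Submodule.mem_dualAnnihilator] at hφ
  have hzero : (fun i => φ ∘ₗ LinearMap.single K (fun _ => V) i) = 0 := by
    refine h _ (fun i => (Submodule.mem_dualAnnihilator _).2 fun v hv => ?_) ?_
    · refine hφ _ (Submodule.mem_sup_left fun j _ => ?_)
      obtain rfl | hij := eq_or_ne j i <;> simp [*]
    · ext v
      have hv := hφ (fun _ => v) (Submodule.mem_sup_right ⟨v, rfl⟩)
      rw [← Finset.univ_sum_single fun _ : κ => v, map_sum] at hv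
      simpa using hv
  refine (Submodule.mem_bot K).2 (LinearMap.pi_ext' fun i => ?_)
  exact congrFun hzero i

section NormedAlgebra

variable {A κ : Type*} [NormedRing A] [NormedAlgebra ℂ A] [FiniteDimensional ℂ A] [Finite κ]

theorem dense_image_units_mul_mul {V : Type*} [NormedRing V] [NormedAlgebra ℂ V]
    [FiniteDimensional ℂ V] {B P : κ → V →ₐ[ℂ] A} {G : V →ₐ[ℂ] A}
    (hsurj : ∀ m : κ → A, ∃ x, ∀ i, B i x + P i x + G x = m i) :
    Dense ((fun x i => B i x * P i x * G x) '' {x | IsUnit x}) := by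
  cases nonempty_fintype κ
  have hpoly : IsPolyMap fun x i => B i x * P i x * G x := isPolyMap_pi fun i =>
    ((isPolyMap_linearMap (B i).toLinearMap).mul (isPolyMap_linearMap (P i).toLinearMap)).mul
      (isPolyMap_linearMap G.toLinearMap)
  have hderiv (f : V →ₐ[ℂ] A) : HasStrictFDerivAt f f.toLinearMap.toContinuousLinearMap 1 :=
    f.toLinearMap.toContinuousLinearMap.hasStrictFDerivAt
  have hderiv_mul : HasStrictFDerivAt (fun x i => B i x * P i x * G x)
      (ContinuousLinearMap.pi fun i =>
        (B i + P i + G : V →ₗ[ℂ] A).toContinuousLinearMap) 1 := by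
    refine hasStrictFDerivAt_pi.2 fun i => (((hderiv (B i)).mul' (hderiv (P i))).mul'
      (hderiv G)).congr_fderiv (ContinuousLinearMap.ext fun x => ?_)
    simp
    abel
  refine (hpoly.denseRange_of_surjective_fderiv hderiv_mul fun m => ?_).dense_image
    hpoly.continuous (dense_setOf_isUnit V)
  obtain ⟨x, hx⟩ := hsurj m
  exact ⟨x, funext hx⟩

theorem dense_setOf_eq_mul_mul_unit (𝔟 : κ → Subalgebra ℂ A) (𝔭 : Subalgebra ℂ A)
    (h : ∀ m : κ → A, ∃ g, ∀ i,
      m i - g ∈ Subalgebra.toSubmodule (𝔟 i) ⊔ Subalgebra.toSubmodule 𝔭) :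
    Dense {L : κ → A | ∃ (g : Aˣ) (p : κ → 𝔭ˣ), ∀ i, ∃ b ∈ 𝔟 i, L i = b * (p i : 𝔭) * g} := by
  cases nonempty_fintype κ
  let V := A × (κ → 𝔭) × ∀ i, 𝔟 i
  let B (i : κ) : V →ₐ[ℂ] A := (𝔟 i).val.comp <| (Pi.evalAlgHom ℂ (fun j => 𝔟 j) i).comp <|
    (AlgHom.snd ℂ _ _).comp (AlgHom.snd ℂ _ _)
  let P (i : κ) : V →ₐ[ℂ] A := 𝔭.val.comp <| (Pi.evalAlgHom ℂ (fun _ => 𝔭) i).comp <|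
    (AlgHom.fst ℂ _ _).comp (AlgHom.snd ℂ _ _)
  let G : V →ₐ[ℂ] A := AlgHom.fst ℂ _ _
  have hsurj (m : κ → A) : ∃ v : V, ∀ i, B i v + P i v + G v = m i := by
    obtain ⟨g, hg⟩ := h m
    choose b hb p hp hbp using fun i => Submodule.mem_sup.1 (hg i)
    exact ⟨(g, fun i => ⟨p i, hp i⟩, fun i => ⟨b i, hb i⟩), fun i => add_eq_of_eq_sub (hbp i)⟩
  refine Dense.mono ?_ (dense_image_units_mul_mul (V := V) (B := B) (P := P) (G := G) hsurj)
  rintro _ ⟨v, hv, rfl⟩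
  obtain ⟨hg, hv⟩ := Prod.isUnit_iff.1 hv
  choose p hp using Pi.isUnit_iff.1 (Prod.isUnit_iff.1 hv).1
  refine ⟨hg.unit, p, fun i => ⟨v.2.2 i, (v.2.2 i).2, ?_⟩⟩
  rw [hp]
  rfl

end NormedAlgebra

end DenseProducts

section TraceDuality

variable {K ι κ : Type*} [Field K] [Fintype ι] [Fintype κ]

theorem exists_eq_trace_mul (φ : Module.Dual K (Matrix ι ι K)) :
    ∃ z : Matrix ι ι K, ∀ x, φ x = (z * x).trace := by
  classical
  refine ⟨of fun j k => φ (single k j 1), fun x => ?_⟩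
  conv_lhs => rw [matrix_eq_sum_single x]
  simp only [map_sum, trace, diag_apply, mul_apply, of_apply]
  rw [Finset.sum_comm]
  refine Finset.sum_congr rfl fun j _ => Finset.sum_congr rfl fun k _ => ?_
  rw [← mul_one (x k j), ← smul_eq_mul (x k j) 1, ← smul_single, map_smul, smul_eq_mul, smul_eq_mul,
    mul_one, mul_comm]

theorem exists_sub_mem_of_trace_mul_eq_zero {N : κ → Submodule K (Matrix ι ι K)}
    (h : ∀ z : κ → Matrix ι ι K, (∀ i, ∀ x ∈ N i, (z i * x).trace = 0) → ∑ i, z i = 0 → z = 0)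
    (m : κ → Matrix ι ι K) : ∃ g, ∀ i, m i - g ∈ N i := by
  refine exists_sub_mem_of_dualAnnihilator (fun φ hφ hsum => ?_) m
  choose z hz using fun i => exists_eq_trace_mul (φ i)
  have hz0 : z = 0 := by
    refine h z (fun i x hx => ?_) (ext_iff_trace_mul_right.2 fun x => ?_)
    · rw [← hz, (Submodule.mem_dualAnnihilator _).1 (hφ i) x hx]
    · rw [Finset.sum_mul, trace_sum, ← Finset.sum_congr rfl fun i _ => hz i x,
        ← LinearMap.sum_apply, hsum]
      simp
  ext i x
  simp [hz, hz0]

end TraceDuality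

section Stabilizer

/-- The subalgebra of elements `a` such that left multiplication by `a` preserves the right ideal
generated by the idempotent `e`; for matrices, those preserving the range of `e`. -/
def idempotentStabilizer (R : Type*) {A : Type*} [CommRing R] [Ring A] [Algebra R A] {e : A}
    (he : IsIdempotentElem e) : Subalgebra R A where
  carrier := {a | e * a * e = a * e}
  mul_mem' {a b} ha hb := by
    have hb : e * b * e = b * e := hb
    calc e * (a * b) * e = e * a * (b * e) := by simp only [mul_assoc]
      _ = e * a * (e * b * e) := by rw [hb]
      _ = (e * a * e) * (b * e) := by simp only [mul_assoc]
      _ = a * (e * b * e) := by rw [show e * a * e = a * e from ha]; simp only [mul_assoc]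
      _ = a * b * e := by rw [hb, mul_assoc]
  add_mem' {a b} ha hb := by
    change e * (a + b) * e = (a + b) * e
    rw [mul_add, add_mul, add_mul, show e * a * e = a * e from ha, show e * b * e = b * e from hb]
  algebraMap_mem' r := by
    change e * algebraMap R A r * e = algebraMap R A r * e
    rw [← Algebra.commutes, mul_assoc, he.eq]

theorem mem_idempotentStabilizer {R A : Type*} [CommRing R] [Ring A] [Algebra R A] {e : A}
    {he : IsIdempotentElem e} {a : A} : a ∈ idempotentStabilizer R he ↔ e * a * e = a * e :=
  Iff.rfl

variable {ι : Type*} [Fintype ι] [DecidableEq ι]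

theorem mul_eq_zero_and_mul_eq_self_of_trace_mul_eq_zero {K : Type*} [Field K] {Q z : Matrix ι ι K}
    (hQ : IsIdempotentElem Q) (h : ∀ m ∈ idempotentStabilizer K hQ, (z * m).trace = 0) :
    z * Q = 0 ∧ Q * z = z := by
  have hQ' : (1 - Q) * Q = 0 := by rw [sub_mul, hQ.eq, one_mul, sub_self]
  constructor
  · refine ext_iff_trace_mul_right.2 fun m => ?_
    rw [zero_mul, trace_zero, mul_assoc]
    refine h _ (mem_idempotentStabilizer.2 ?_)
    rw [← mul_assoc, hQ.eq]
  · rw [← sub_eq_zero, ← neg_eq_zero, neg_sub]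
    have hzero : (1 - Q) * z = 0 := ext_iff_trace_mul_right.2 fun m => by
      rw [zero_mul, trace_zero, mul_assoc, trace_mul_comm, mul_assoc]
      refine h _ (mem_idempotentStabilizer.2 ?_)
      rw [mul_assoc, mul_assoc, hQ', mul_zero, mul_zero]
    rwa [sub_mul, one_mul] at hzero

open scoped ComplexOrder in
theorem commute_of_mem_idempotentStabilizer {Q m : Matrix ι ι ℂ} (hQ : IsStarProjection Q)
    (hm : m ∈ unitaryGroup ι ℂ) (hmQ : m ∈ idempotentStabilizer ℂ hQ.isIdempotentElem) :
    Commute m Q := by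
  have hQQ : Q * Q = Q := hQ.isIdempotentElem
  have hQs : Qᴴ = Q := hQ.isSelfAdjoint
  have hmm : m * mᴴ = 1 := mem_unitaryGroup_iff.1 hm
  have hmm' : mᴴ * m = 1 := mem_unitaryGroup_iff'.1 hm
  have hpres : Q * m * Q = m * Q := hmQ
  have hpres_star : Q * mᴴ * Q = Q * mᴴ := by
    simpa only [conjTranspose_mul, hQs, mul_assoc] using congrArg conjTranspose hpres
  have hzero : Q * m * (1 - Q) = 0 := by
    rw [← trace_mul_conjTranspose_self_eq_zero_iff]
    have hprod : Q * m * (1 - Q) * (Q * m * (1 - Q))ᴴ = Q - m * Q * mᴴ := by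
      calc _ = Q * m * ((1 - Q) * (1 - Q)) * mᴴ * Q := by
            simp only [conjTranspose_mul, conjTranspose_sub, conjTranspose_one, hQs, mul_assoc]
        _ = Q * (m * mᴴ) * Q - (Q * m * Q) * mᴴ * Q := by
            rw [show (1 - Q) * (1 - Q) = 1 - Q by
              rw [mul_sub, mul_one, sub_mul, one_mul, hQQ, sub_self, sub_zero]]
            noncomm_ring
        _ = _ := by
            rw [hmm, mul_one, hQQ, hpres, mul_assoc m, mul_assoc m, hpres_star, ← mul_assoc]
    rw [hprod, trace_sub, trace_mul_cycle, hmm', one_mul, sub_self]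
  rw [mul_sub, mul_one, sub_eq_zero] at hzero
  exact (hzero.trans hpres).symm

end Stabilizer

section AdaptedFrames

variable {ι κ : Type*} [Fintype ι] [DecidableEq ι]

/-- The unitary frames `V i` have a common leading subspace, the range of `V i * Q * star (V i)`,
on which `L i` is compatible with the subalgebra `𝔟 i`; here `adaptedFrames Q 𝔟` is the set of
families `L` which admit such frames. -/
def adaptedFrames (Q : Matrix ι ι ℂ) (𝔟 : κ → Subalgebra ℂ (Matrix ι ι ℂ)) :
    Set (κ → Matrix ι ι ℂ) :=
  {L | ∃ V : κ → unitaryGroup ι ℂ, (∀ i k, (V i * Q * star (V i) : Matrix ι ι ℂ) =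
    V k * Q * star (V k)) ∧ ∀ i, L i * V i * Q ∈ 𝔟 i}

instance compactSpace_unitaryGroup : CompactSpace (unitaryGroup ι ℂ) := by
  have hball : IsCompact (Set.univ.pi fun _ : ι => Set.univ.pi fun _ : ι =>
      Metric.closedBall (0 : ℂ) 1) :=
    isCompact_univ_pi fun _ => isCompact_univ_pi fun _ => isCompact_closedBall 0 1
  refine isCompact_iff_compactSpace.1 <| hball.of_isClosed_subset
    (isClosed_unitary (R := Matrix ι ι ℂ)) fun A hA i _ j _ => ?_
  simpa using entry_norm_bound_of_unitary hA i j

theorem isClosed_adaptedFrames (Q : Matrix ι ι ℂ) (𝔟 : κ → Subalgebra ℂ (Matrix ι ι ℂ)) :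
    IsClosed (adaptedFrames Q 𝔟) := by
  let C : Set ((κ → Matrix ι ι ℂ) × (κ → unitaryGroup ι ℂ)) :=
    {w | (∀ i k, (w.2 i * Q * star (w.2 i) : Matrix ι ι ℂ) = w.2 k * Q * star (w.2 k)) ∧
      ∀ i, w.1 i * w.2 i * Q ∈ 𝔟 i}
  have hC : IsClosed C := by
    simp only [C, Set.ofPred_and, Set.ofPred_forall]
    refine IsClosed.inter (isClosed_iInter fun i => isClosed_iInter fun k => ?_)
      (isClosed_iInter fun i => ?_)
    · exact isClosed_eq (by fun_prop) (by fun_prop)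
    · have hclosed : IsClosed (𝔟 i : Set (Matrix ι ι ℂ)) :=
        (Subalgebra.toSubmodule (𝔟 i)).closed_of_finiteDimensional
      exact hclosed.preimage (by fun_prop)
  convert isClosedMap_fst_of_compactSpace _ hC
  ext L
  exact ⟨fun ⟨V, hV⟩ => ⟨(L, V), hV, rfl⟩, fun ⟨⟨_, V⟩, hV, hL⟩ => ⟨V, hL ▸ hV⟩⟩

variable {Q : Matrix ι ι ℂ} (hQ : IsStarProjection Q) {𝔟 : κ → Subalgebra ℂ (Matrix ι ι ℂ)}

include hQ in
theorem mem_adaptedFrames_of_eq_mul_mul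
    (hIwasawa : ∀ i, ∀ y : (Matrix ι ι ℂ)ˣ, ∃ t : (idempotentStabilizer ℂ hQ.isIdempotentElem)ˣ,
      y * (t : Matrix ι ι ℂ) ∈ unitaryGroup ι ℂ ∧ (t : Matrix ι ι ℂ) * Q ∈ 𝔟 i)
    {L : κ → Matrix ι ι ℂ} {g : (Matrix ι ι ℂ)ˣ}
    {p : κ → (idempotentStabilizer ℂ hQ.isIdempotentElem)ˣ}
    (hL : ∀ i, ∃ b ∈ 𝔟 i, L i = b * (p i : Matrix ι ι ℂ) * g) : L ∈ adaptedFrames Q 𝔟 := by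
  let 𝔭 := idempotentStabilizer ℂ hQ.isIdempotentElem
  let toGL : 𝔭ˣ →* (Matrix ι ι ℂ)ˣ := Units.map (𝔭.val : 𝔭 →* Matrix ι ι ℂ)
  choose t hV htQ using fun i => hIwasawa i (g⁻¹ * (toGL (p i))⁻¹)
  let V (i : κ) : unitaryGroup ι ℂ := ⟨_, hV i⟩
  refine ⟨V, fun i k => ?_, fun i => ?_⟩
  · have hunits (i : κ) : Unitary.toUnits (V i) = g⁻¹ * (toGL (p i))⁻¹ * toGL (t i) :=
      Units.ext rfl
    have hcoset : (star (V k) * V i : Matrix ι ι ℂ) = toGL ((t k)⁻¹ * p k * (p i)⁻¹ * t i) := by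
      change (((Unitary.toUnits (V k))⁻¹ * Unitary.toUnits (V i) : (Matrix ι ι ℂ)ˣ) : Matrix ι ι ℂ)
        = _
      rw [hunits, hunits]
      simp only [map_mul, map_inv]
      group
    have hcomm : Commute (star (V k) * V i : Matrix ι ι ℂ) Q :=
      commute_of_mem_idempotentStabilizer hQ (star (V k) * V i).2 <| by
        rw [hcoset]
        exact ((t k)⁻¹ * p k * (p i)⁻¹ * t i : 𝔭ˣ).1.2
    calc (V i * Q * star (V i) : Matrix ι ι ℂ)
        = V k * (star (V k) * V i * Q) * star (V i) := by
          simp [← mul_assoc]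
      _ = V k * Q * star (V k) * (V i * star (V i)) := by rw [hcomm.eq]; simp only [mul_assoc]
      _ = V k * Q * star (V k) := by simp
  · obtain ⟨b, hb, hLi⟩ := hL i
    have hcancel : L i * V i = b * (t i : Matrix ι ι ℂ) := by
      calc L i * V i = b * ((toGL (p i) * g * (g⁻¹ * (toGL (p i))⁻¹) : (Matrix ι ι ℂ)ˣ) :
            Matrix ι ι ℂ) * (t i : Matrix ι ι ℂ) := by
            rw [hLi, Units.val_mul, Units.val_mul]
            simp only [mul_assoc, V]
            rfl
        _ = b * (t i : Matrix ι ι ℂ) := by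
            rw [show toGL (p i) * g * (g⁻¹ * (toGL (p i))⁻¹) = 1 by group, Units.val_one, mul_one]
    rw [hcancel, mul_assoc]
    exact mul_mem hb (htQ i)

open scoped Matrix.Norms.L2Operator in
include hQ in
theorem adaptedFrames_eq_univ [Fintype κ]
    (hIwasawa : ∀ i, ∀ y : (Matrix ι ι ℂ)ˣ, ∃ t : (idempotentStabilizer ℂ hQ.isIdempotentElem)ˣ,
      y * (t : Matrix ι ι ℂ) ∈ unitaryGroup ι ℂ ∧ (t : Matrix ι ι ℂ) * Q ∈ 𝔟 i)
    (h : ∀ z : κ → Matrix ι ι ℂ, (∀ i, z i * Q = 0 ∧ Q * z i = z i) →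
      (∀ i, ∀ b ∈ 𝔟 i, (z i * b).trace = 0) → ∑ i, z i = 0 → z = 0) :
    adaptedFrames Q 𝔟 = Set.univ := by
  have hdense := dense_setOf_eq_mul_mul_unit 𝔟 (idempotentStabilizer ℂ hQ.isIdempotentElem) <|
    exists_sub_mem_of_trace_mul_eq_zero fun z hz => h z
      (fun i => mul_eq_zero_and_mul_eq_self_of_trace_mul_eq_zero hQ.isIdempotentElem
        fun m hm => hz i m (Submodule.mem_sup_right hm))
      fun i b hb => hz i b (Submodule.mem_sup_left hb)
  refine (isClosed_adaptedFrames Q 𝔟).closure_eq.symm.trans (Dense.mono ?_ hdense).closure_eq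
  rintro L ⟨g, p, hL⟩
  exact mem_adaptedFrames_of_eq_mul_mul hQ hIwasawa hL

end AdaptedFrames

section UnitaryConjugation

variable {ι : Type*} [Fintype ι] [DecidableEq ι]

/-- Conjugation `x ↦ U * x * star U` of complex matrices, as an action of the unitary group. -/
def unitaryConj : unitaryGroup ι ℂ →* (Matrix ι ι ℂ ≃⋆ₐ[ℂ] Matrix ι ι ℂ) :=
  Unitary.conjStarAlgAut ℂ (Matrix ι ι ℂ)

theorem unitaryConj_apply (U : unitaryGroup ι ℂ) (x : Matrix ι ι ℂ) :
    unitaryConj U x = U * x * star (U : Matrix ι ι ℂ) :=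
  rfl

theorem unitaryConj_eq_iff {U : unitaryGroup ι ℂ} {x y : Matrix ι ι ℂ} :
    unitaryConj U x = y ↔ (U * x : Matrix ι ι ℂ) = y * U := by
  rw [← (Unitary.toUnits U).mul_left_inj, unitaryConj_apply, Unitary.val_toUnits_apply, mul_assoc,
    mem_unitaryGroup_iff'.1 U.2, mul_one]

theorem trace_unitaryConj (U : unitaryGroup ι ℂ) (x : Matrix ι ι ℂ) :
    (unitaryConj U x).trace = x.trace := by
  rw [unitaryConj_apply, trace_mul_cycle, Unitary.coe_star_mul_self, one_mul]

/-- The complex diagonal matrix with real diagonal entries `x`. -/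
def realDiagonal (x : ι → ℝ) : Matrix ι ι ℂ :=
  diagonal fun j => (x j : ℂ)

theorem realDiagonal_mul_apply (x : ι → ℝ) (m : Matrix ι ι ℂ) (j k : ι) :
    (realDiagonal x * m) j k = x j * m j k :=
  diagonal_mul _ _ _ _

theorem mul_realDiagonal_apply (x : ι → ℝ) (m : Matrix ι ι ℂ) (j k : ι) :
    (m * realDiagonal x) j k = m j k * x k :=
  mul_diagonal _ _ _ _

omit [Fintype ι] in
theorem isHermitian_realDiagonal (x : ι → ℝ) : (realDiagonal x).IsHermitian := by
  simp [IsHermitian, realDiagonal, diagonal_conjTranspose, Pi.star_def]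

theorem isStarProjection_realDiagonal_indicator (S : Set ι) :
    IsStarProjection (realDiagonal (S.indicator 1)) := by
  classical
  refine ⟨?_, isHermitian_realDiagonal _⟩
  rw [IsIdempotentElem, realDiagonal, diagonal_mul_diagonal]
  congr! 2 with j
  by_cases hj : j ∈ S <;> simp [hj]

end UnitaryConjugation

section SpectralFlags

variable {ι : Type*} [Fintype ι] [DecidableEq ι]

/-- The subalgebra of matrices which, in the orthonormal basis given by the columns of `U`, preserve
all the coordinate subspaces `{j | c ≤ x j}`. -/
noncomputable def flagSubalgebra (U : unitaryGroup ι ℂ) (x : ι → ℝ) : Subalgebra ℂ (Matrix ι ι ℂ) :=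
  (blockTriangularSubalgebra ℂ ℂ fun j => -x j).comap
    ((unitaryConj U).symm : Matrix ι ι ℂ →ₐ[ℂ] Matrix ι ι ℂ)

theorem mem_flagSubalgebra {U : unitaryGroup ι ℂ} {x : ι → ℝ} {m : Matrix ι ι ℂ} :
    m ∈ flagSubalgebra U x ↔ ∀ j k, x j < x k → (unitaryConj U).symm m j k = 0 :=
  forall₂_congr fun _ _ => imp_congr neg_lt_neg_iff Iff.rfl

theorem apply_eq_zero_of_trace_mul_flagSubalgebra_eq_zero {U : unitaryGroup ι ℂ} {x : ι → ℝ}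
    {z : Matrix ι ι ℂ} (h : ∀ b ∈ flagSubalgebra U x, (z * b).trace = 0) {j k : ι}
    (hjk : x j ≤ x k) : (unitaryConj U).symm z j k = 0 := by
  have hmem : unitaryConj U (single k j 1) ∈ flagSubalgebra U x := by
    refine mem_flagSubalgebra.2 fun k' j' hlt => ?_
    rw [StarAlgEquiv.symm_apply_apply]
    refine single_apply_of_ne _ _ _ _ _ ?_
    rintro ⟨rfl, rfl⟩
    exact hjk.not_gt hlt
  have hz := h _ hmem
  rw [← (unitaryConj U).apply_symm_apply z, ← map_mul, trace_unitaryConj, trace_mul_single] at hz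
  simpa using hz

theorem le_re_conjTranspose_mul_realDiagonal_mul_apply {m : Matrix ι ι ℂ}
    (hm : m ∈ unitaryGroup ι ℂ) {x : ι → ℝ} {k : ι} (h : ∀ j, x j < x k → m j k = 0) :
    x k ≤ ((mᴴ * realDiagonal x * m) k k).re := by
  have hcol : ∑ j, ‖m j k‖ ^ 2 = 1 := by
    have hentry := congrFun₂ (mem_unitaryGroup_iff'.1 hm) k k
    simp only [star_eq_conjTranspose, mul_apply, conjTranspose_apply, one_apply_eq,
      RCLike.star_def, Complex.conj_mul'] at hentry
    exact_mod_cast hentry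
  have hentry : ((mᴴ * realDiagonal x * m) k k).re = ∑ j, x j * ‖m j k‖ ^ 2 := by
    rw [mul_apply, Complex.re_sum]
    refine Finset.sum_congr rfl fun j _ => ?_
    rw [mul_realDiagonal_apply, conjTranspose_apply, mul_right_comm, RCLike.star_def,
      Complex.conj_mul', mul_comm]
    norm_cast
  rw [hentry, ← mul_one (x k), ← hcol, Finset.mul_sum]
  refine Finset.sum_le_sum fun j _ => ?_
  obtain hlt | hle := lt_or_ge (x j) (x k)
  · simp [h j hlt]
  · gcongr

theorem re_trace_mul_le_of_mul_mem_flagSubalgebra {U : unitaryGroup ι ℂ} {x d : ι → ℝ}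
    (hd : 0 ≤ d) {m : Matrix ι ι ℂ} (hm : m ∈ unitaryGroup ι ℂ)
    (hmd : m * unitaryConj U (realDiagonal d) ∈ flagSubalgebra U x) :
    (unitaryConj U (realDiagonal d) * unitaryConj U (realDiagonal x)).trace.re ≤
      (unitaryConj U (realDiagonal d) * (mᴴ * unitaryConj U (realDiagonal x) * m)).trace.re := by
  obtain ⟨m, rfl⟩ : ∃ m', unitaryConj U m' = m := ⟨_, (unitaryConj U).apply_symm_apply m⟩
  have hm' : m ∈ unitaryGroup ι ℂ := by
    simpa using Unitary.map_mem (unitaryConj U).symm hm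
  rw [← star_eq_conjTranspose, ← map_star, ← map_mul, ← map_mul, ← map_mul, ← map_mul,
    trace_unitaryConj, trace_unitaryConj, trace, trace, Complex.re_sum, Complex.re_sum]
  refine Finset.sum_le_sum fun k _ => ?_
  rw [diag_apply, diag_apply, realDiagonal_mul_apply, realDiagonal_mul_apply, Complex.re_ofReal_mul,
    Complex.re_ofReal_mul]
  obtain hk | hk : 0 = d k ∨ 0 < d k := (hd k).eq_or_lt
  · simp [← hk]
  refine mul_le_mul_of_nonneg_left ?_ hk.le
  rw [realDiagonal, diagonal_apply_eq, Complex.ofReal_re]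
  refine le_re_conjTranspose_mul_realDiagonal_mul_apply hm' fun j hjk => ?_
  have hzero := mem_flagSubalgebra.1 hmd j k hjk
  rw [← map_mul, StarAlgEquiv.symm_apply_apply, mul_realDiagonal_apply] at hzero
  simpa [hk.ne'] using hzero

end SpectralFlags

section Iwasawa

variable {n : ℕ}

theorem exists_upperTriangular_mul_mem_unitaryGroup {𝕜 : Type*} [RCLike 𝕜]
    (y : (Matrix (Fin n) (Fin n) 𝕜)ˣ) :
    ∃ t : (blockTriangularSubalgebra 𝕜 𝕜 (id : Fin n → Fin n))ˣ,
      (y * (t : Matrix (Fin n) (Fin n) 𝕜) : Matrix (Fin n) (Fin n) 𝕜) ∈ unitaryGroup (Fin n) 𝕜 := by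
  let e := EuclideanSpace.basisFun (Fin n) 𝕜
  let f (j : Fin n) : EuclideanSpace 𝕜 (Fin n) := WithLp.toLp 2 fun k => y.1 k j
  let B := InnerProductSpace.gramSchmidtOrthonormalBasis (𝕜 := 𝕜)
    (finrank_euclideanSpace_fin.trans (Fintype.card_fin n).symm) f
  let r := B.toBasis.toMatrix f
  have hr : r.IsUpperTriangular :=
    InnerProductSpace.gramSchmidtOrthonormalBasis_inv_isUpperTriangular _ f
  have hy : y = e.toBasis.toMatrix B * r := by
    rw [← OrthonormalBasis.coe_toBasis B, Module.Basis.toMatrix_mul_toMatrix]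
    rfl
  have hr_unit : IsUnit r.det := by
    refine isUnit_of_mul_isUnit_right (x := (e.toBasis.toMatrix B).det) ?_
    rw [← det_mul, ← hy]
    exact (isUnit_iff_isUnit_det _).1 y.isUnit
  have := r.invertibleOfIsUnitDet hr_unit
  refine ⟨⟨⟨r⁻¹, blockTriangular_inv_of_blockTriangular hr⟩, ⟨r, hr⟩,
    Subtype.ext (nonsing_inv_mul r hr_unit), Subtype.ext (mul_nonsing_inv r hr_unit)⟩, ?_⟩
  change y.1 * r⁻¹ ∈ _
  rw [hy, mul_nonsing_inv_cancel_right _ _ hr_unit]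
  exact e.toMatrix_orthonormalBasis_mem_unitary B

theorem exists_mul_mem_unitaryGroup_of_isLowerSet (U : unitaryGroup (Fin n) ℂ) {x : Fin n → ℝ}
    {S : Set (Fin n)} (hS : IsLowerSet S) (hx : AntitoneOn x S)
    {Q : Matrix (Fin n) (Fin n) ℂ} (hQ : IsIdempotentElem Q)
    (hQU : Q = unitaryConj U (realDiagonal (S.indicator 1))) (y : (Matrix (Fin n) (Fin n) ℂ)ˣ) :
    ∃ t : (idempotentStabilizer ℂ hQ)ˣ,
      y * (t : Matrix (Fin n) (Fin n) ℂ) ∈ unitaryGroup (Fin n) ℂ ∧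
        (t : Matrix (Fin n) (Fin n) ℂ) * Q ∈ flagSubalgebra U x := by
  classical
  obtain ⟨t, ht⟩ := exists_upperTriangular_mul_mem_unitaryGroup (y * (Unitary.toUnits U))
  let conjU := (unitaryConj U : Matrix (Fin n) (Fin n) ℂ →ₐ[ℂ] Matrix (Fin n) (Fin n) ℂ)
  have hstab (r : blockTriangularSubalgebra ℂ ℂ (id : Fin n → Fin n)) :
      conjU.comp (Subalgebra.val _) r ∈ idempotentStabilizer ℂ hQ := by
    change Q * unitaryConj U r * Q = unitaryConj U r * Q
    rw [hQU, ← map_mul, ← map_mul, ← map_mul]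
    congr 1
    ext j k
    rw [mul_realDiagonal_apply, mul_realDiagonal_apply, realDiagonal_mul_apply]
    by_cases hk : k ∈ S
    · by_cases hj : j ∈ S
      · simp [hj]
      · simp [hj, r.2 (show id k < id j from lt_of_not_ge fun hle => hj (hS hle hk))]
    · simp [hk]
  refine ⟨Units.map ((conjU.comp (Subalgebra.val _)).codRestrict _ hstab).toMonoidHom t, ?_, ?_⟩
  · change y.1 * unitaryConj U (t : Matrix (Fin n) (Fin n) ℂ) ∈ _
    rw [unitaryConj_apply, ← mul_assoc, ← mul_assoc]
    exact mul_mem ht (star U).2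
  · change unitaryConj U (t : Matrix (Fin n) (Fin n) ℂ) * Q ∈ _
    refine mem_flagSubalgebra.2 fun j k hjk => ?_
    rw [hQU, ← map_mul, StarAlgEquiv.symm_apply_apply, mul_realDiagonal_apply]
    by_cases hk : k ∈ S
    · have hkj : id k < id j := lt_of_not_ge fun hle => hjk.not_ge (hx (hS hle hk) hk hle)
      simp [t.1.2 hkj]
    · simp [hk]

end Iwasawa

section JointDiagonalization

theorem exists_orthonormalBasis_mem_of_iSup_eq_top {𝕜 E σ : Type*} [RCLike 𝕜]
    [NormedAddCommGroup E] [InnerProductSpace 𝕜 E] [FiniteDimensional 𝕜 E] {n : ℕ}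
    (hn : Module.finrank 𝕜 E = n) {F : σ → Submodule 𝕜 E}
    (hF : OrthogonalFamily 𝕜 (fun i => F i) fun i => (F i).subtypeₗᵢ) (htop : ⨆ i, F i = ⊤) :
    ∃ e : OrthonormalBasis (Fin n) 𝕜 E, ∀ j, ∃ i, e j ∈ F i := by
  classical
  have : Fintype {i // F i ≠ ⊥} := hF.independent.fintypeNeBotOfFiniteDimensional
  have hV := hF.comp (Subtype.val_injective (p := fun i => F i ≠ ⊥))
  have hint : DirectSum.IsInternal fun i : {i // F i ≠ ⊥} => F i := by
    refine hV.isInternal_iff.2 ?_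
    rw [Submodule.orthogonal_eq_bot_iff]
    exact (iSup_ne_bot_subtype F).trans htop
  exact ⟨hint.subordinateOrthonormalBasis hn hV, fun j =>
    ⟨_, hint.subordinateOrthonormalBasis_subordinate hn j hV⟩⟩

theorem exists_orthonormalBasis_apply_eq_smul {𝕜 E : Type*} [RCLike 𝕜] [NormedAddCommGroup E]
    [InnerProductSpace 𝕜 E] [FiniteDimensional 𝕜 E] {n : ℕ} (hn : Module.finrank 𝕜 E = n)
    {S T : E →ₗ[𝕜] E} (hS : S.IsSymmetric) (hT : T.IsSymmetric) (hST : Commute S T) :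
    ∃ (e : OrthonormalBasis (Fin n) 𝕜 E) (x b : Fin n → ℝ),
      ∀ j, S (e j) = (x j : 𝕜) • e j ∧ T (e j) = (b j : 𝕜) • e j := by
  obtain ⟨e, he⟩ := exists_orthonormalBasis_mem_of_iSup_eq_top hn
    (hS.orthogonalFamily_eigenspace_inf_eigenspace hT) <| by
      rw [iSup_prod, iSup_comm]
      exact hS.iSup_iSup_eigenspace_inf_eigenspace_eq_top_of_commute hT hST
  have hreal {R : E →ₗ[𝕜] E} (hR : R.IsSymmetric) {μ : 𝕜} {j : Fin n}
      (h : e j ∈ Module.End.eigenspace R μ) : R (e j) = ((RCLike.re μ : ℝ) : 𝕜) • e j := by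
    have hμ : Module.End.HasEigenvalue R μ :=
      Module.End.hasEigenvalue_of_hasEigenvector ⟨h, e.orthonormal.ne_zero j⟩
    rw [RCLike.conj_eq_iff_re.1 (hR.conj_eigenvalue_eq_self hμ)]
    exact Module.End.mem_eigenspace_iff.1 h
  choose μ hμ using he
  exact ⟨e, fun j => RCLike.re (μ j).2, fun j => RCLike.re (μ j).1,
    fun j => ⟨hreal hS (hμ j).1, hreal hT (hμ j).2⟩⟩

variable {n : ℕ}

theorem exists_eq_unitaryConj_realDiagonal {X Y : Matrix (Fin n) (Fin n) ℂ}
    (hX : X.IsHermitian) (hY : Y.IsHermitian) (hXY : Commute X Y) :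
    ∃ (U : unitaryGroup (Fin n) ℂ) (x y : Fin n → ℝ),
      X = unitaryConj U (realDiagonal x) ∧ Y = unitaryConj U (realDiagonal y) := by
  have hcomm : Commute (toEuclideanLin X) (toEuclideanLin Y) := by
    change toLpLin 2 2 X ∘ₗ toLpLin 2 2 Y = toLpLin 2 2 Y ∘ₗ toLpLin 2 2 X
    rw [← toLpLin_mul, hXY.eq, toLpLin_mul]
  obtain ⟨e, x, y, h⟩ := exists_orthonormalBasis_apply_eq_smul finrank_euclideanSpace_fin
    (isSymmetric_toEuclideanLin_iff.2 hX) (isSymmetric_toEuclideanLin_iff.2 hY) hcomm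
  let U : unitaryGroup (Fin n) ℂ :=
    ⟨(EuclideanSpace.basisFun (Fin n) ℂ).toBasis.toMatrix e,
      OrthonormalBasis.toMatrix_orthonormalBasis_mem_unitary _ e⟩
  have hdiag {M : Matrix (Fin n) (Fin n) ℂ} {m : Fin n → ℝ}
      (hM : ∀ j, toEuclideanLin M (e j) = (m j : ℂ) • e j) :
      M = unitaryConj U (realDiagonal m) := by
    have hMU : M * U = U * realDiagonal m := by
      ext k j
      rw [mul_realDiagonal_apply, mul_comm]
      exact congrFun (congrArg WithLp.ofLp (hM j)) k
    exact (unitaryConj_eq_iff.2 hMU.symm).symm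
  exact ⟨U, x, y, hdiag fun j => (h j).1, hdiag fun j => (h j).2⟩

theorem exists_unitaryConj_realDiagonal_comp_perm (U : unitaryGroup (Fin n) ℂ)
    (σ : Equiv.Perm (Fin n)) : ∃ U' : unitaryGroup (Fin n) ℂ, ∀ x : Fin n → ℝ,
      unitaryConj U' (realDiagonal (x ∘ σ)) = unitaryConj U (realDiagonal x) := by
  refine ⟨⟨U.1.submatrix id σ, ?_⟩, fun x => ?_⟩
  · rw [mem_unitaryGroup_iff, star_eq_conjTranspose, conjTranspose_submatrix,
      submatrix_mul_equiv]
    exact mem_unitaryGroup_iff.1 U.2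
  · simp only [unitaryConj_apply, star_eq_conjTranspose, conjTranspose_submatrix]
    rw [show realDiagonal (x ∘ σ) = (realDiagonal x).submatrix σ σ from
      (submatrix_diagonal_equiv (fun j => (x j : ℂ)) σ).symm,
      submatrix_mul_equiv, submatrix_mul_equiv,
      submatrix_id_id]

theorem exists_perm_isLowerSet_antitoneOn (x y : Fin n → ℝ) :
    ∃ σ : Equiv.Perm (Fin n), IsLowerSet {j | 0 < y (σ j)} ∧
      AntitoneOn (x ∘ σ) {j | 0 < y (σ j)} := by
  let key (j : Fin n) : ℕ ×ₗ ℝ := toLex (if 0 < y j then 0 else 1, -x j)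
  have hkey {j k : Fin n} (hjk : j ≤ k) (hk : 0 < y (Tuple.sort key k)) :
      0 < y (Tuple.sort key j) ∧ x (Tuple.sort key k) ≤ x (Tuple.sort key j) := by
    have hle := Tuple.monotone_sort key hjk
    by_cases hj : 0 < y (Tuple.sort key j)
    · simpa [key, Prod.Lex.toLex_le_toLex, hj, hk] using hle
    · simp [key, Prod.Lex.toLex_le_toLex, hj, hk] at hle
  exact ⟨Tuple.sort key, fun k j hjk hk => (hkey hjk hk).1, fun j _ k hk hjk => (hkey hjk hk).2⟩

theorem exists_sorted_unitaryConj_realDiagonal {X Y : Matrix (Fin n) (Fin n) ℂ}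
    (hX : X.IsHermitian) (hY : Y.IsHermitian) (hXY : Commute X Y) :
    ∃ (U : unitaryGroup (Fin n) ℂ) (x y : Fin n → ℝ),
      X = unitaryConj U (realDiagonal x) ∧ Y = unitaryConj U (realDiagonal y) ∧
        IsLowerSet {j | 0 < y j} ∧ AntitoneOn x {j | 0 < y j} := by
  obtain ⟨U, x, y, hx, hy⟩ := exists_eq_unitaryConj_realDiagonal hX hY hXY
  obtain ⟨σ, hlower, hanti⟩ := exists_perm_isLowerSet_antitoneOn x y
  obtain ⟨U', hU'⟩ := exists_unitaryConj_realDiagonal_comp_perm U σ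
  exact ⟨U', x ∘ σ, y ∘ σ, hx.trans (hU' x).symm, hy.trans (hU' y).symm, hlower, hanti⟩

theorem unitaryConj_realDiagonal_comp {ι : Type*} [Fintype ι] [DecidableEq ι]
    {U U' : unitaryGroup ι ℂ} {x x' : ι → ℝ}
    (h : unitaryConj U (realDiagonal x) = unitaryConj U' (realDiagonal x')) (f : ℝ → ℝ) :
    unitaryConj U (realDiagonal (f ∘ x)) = unitaryConj U' (realDiagonal (f ∘ x')) := by
  obtain ⟨W, rfl⟩ : ∃ W, U = U' * W := ⟨U'⁻¹ * U, (mul_inv_cancel_left _ _).symm⟩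
  have hiff (d d' : ι → ℝ) : unitaryConj (U' * W) (realDiagonal d) = unitaryConj U'
      (realDiagonal d') ↔ ∀ j k, (W : Matrix ι ι ℂ) j k * (d k - d' j : ℝ) = 0 := by
    rw [map_mul, StarAlgEquiv.mul_apply, (EquivLike.injective _).eq_iff, unitaryConj_eq_iff,
      ← Matrix.ext_iff]
    refine forall₂_congr fun j k => ?_
    rw [mul_realDiagonal_apply, realDiagonal_mul_apply, mul_comm (d' j : ℂ), ← sub_eq_zero,
      ← mul_sub, Complex.ofReal_sub]
  rw [hiff] at h ⊢
  intro j k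
  obtain hW | hxx := mul_eq_zero.1 (h j k)
  · rw [hW, zero_mul]
  · rw [Complex.ofReal_eq_zero, sub_eq_zero] at hxx
    simp [hxx]

end JointDiagonalization

section Raising

variable {ι : Type*} [Fintype ι] [DecidableEq ι]

omit [DecidableEq ι] in
theorem trace_mul_lie {R : Type*} [CommRing R] (a b c : Matrix ι ι R) :
    (a * ⁅b, c⁆).trace = (⁅a, b⁆ * c).trace := by
  rw [Ring.lie_def, Ring.lie_def, mul_sub, sub_mul, trace_sub, trace_sub, ← mul_assoc,
    ← mul_assoc a, trace_mul_cycle a c b]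

/-- The span of the joint eigenvectors of `ad X` and `ad Y` with both eigenvalues positive. For
commuting Hermitian matrices, these are the matrices which map each joint eigenvector of `X` and `Y`
to a combination of joint eigenvectors for which both eigenvalues are strictly larger. -/
def raising (X Y : Matrix ι ι ℂ) : Submodule ℂ (Matrix ι ι ℂ) :=
  Submodule.span ℂ {z | ∃ α γ : ℝ, 0 < α ∧ 0 < γ ∧ ⁅X, z⁆ = (α : ℂ) • z ∧
    ⁅Y, z⁆ = (γ : ℂ) • z}

omit [DecidableEq ι] in
theorem raising_comm (X Y : Matrix ι ι ℂ) : raising X Y = raising Y X := by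
  refine congrArg (Submodule.span ℂ) (Set.ext fun z => ?_)
  constructor <;> exact fun ⟨α, γ, hα, hγ, hX, hY⟩ => ⟨γ, α, hγ, hα, hY, hX⟩

theorem lie_unitaryConj_realDiagonal (U : unitaryGroup ι ℂ) (x : ι → ℝ) (z : Matrix ι ι ℂ) :
    ⁅unitaryConj U (realDiagonal x), unitaryConj U z⁆ =
      unitaryConj U (of fun j k => (x j - x k : ℝ) * z j k) := by
  rw [Ring.lie_def, ← map_mul, ← map_mul, ← map_sub]
  congr 1
  ext j k
  rw [Matrix.sub_apply, realDiagonal_mul_apply, mul_realDiagonal_apply, of_apply,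
    Complex.ofReal_sub]
  ring

theorem lie_unitaryConj_realDiagonal_eq_smul_iff {U : unitaryGroup ι ℂ} {x : ι → ℝ}
    {z : Matrix ι ι ℂ} {c : ℝ} : ⁅unitaryConj U (realDiagonal x), z⁆ = (c : ℂ) • z ↔
      ∀ j k, (unitaryConj U).symm z j k ≠ 0 → x j - x k = c := by
  obtain ⟨z, rfl⟩ : ∃ z', unitaryConj U z' = z := ⟨_, (unitaryConj U).apply_symm_apply z⟩
  rw [StarAlgEquiv.symm_apply_apply, lie_unitaryConj_realDiagonal, ← map_smul,
    (EquivLike.injective _).eq_iff, ← Matrix.ext_iff]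
  refine forall₂_congr fun j k => ?_
  rw [of_apply, Matrix.smul_apply, smul_eq_mul, mul_eq_mul_right_iff]
  norm_cast
  tauto

theorem mem_raising_iff {U : unitaryGroup ι ℂ} {x y : ι → ℝ} {z : Matrix ι ι ℂ} :
    z ∈ raising (unitaryConj U (realDiagonal x)) (unitaryConj U (realDiagonal y)) ↔
      ∀ j k, (unitaryConj U).symm z j k ≠ 0 → x k < x j ∧ y k < y j := by
  constructor
  · intro hz j k
    induction hz using Submodule.span_induction with
    | mem z hz =>
      intro hjk
      obtain ⟨α, γ, hα, hγ, hXz, hYz⟩ := hz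
      have hxα := lie_unitaryConj_realDiagonal_eq_smul_iff.1 hXz j k hjk
      have hyγ := lie_unitaryConj_realDiagonal_eq_smul_iff.1 hYz j k hjk
      constructor <;> linarith
    | zero => simp
    | add z z' _ _ hz hz' =>
      rw [map_add, Matrix.add_apply]
      grind
    | smul c z _ hz =>
      rw [map_smul, Matrix.smul_apply]
      exact fun hjk => hz (right_ne_zero_of_smul hjk)
  · intro h
    rw [← (unitaryConj U).apply_symm_apply z, matrix_eq_sum_single ((unitaryConj U).symm z)]
    simp only [map_sum]
    refine Submodule.sum_mem _ fun j _ => Submodule.sum_mem _ fun k _ => ?_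
    by_cases hjk : (unitaryConj U).symm z j k = 0
    · simp [hjk]
    obtain ⟨hx, hy⟩ := h j k hjk
    have hsupport {u : ι → ℝ} {c : ℂ} (j' k' : ι)
        (h : (unitaryConj U).symm (unitaryConj U (single j k c)) j' k' ≠ 0) :
        u j' - u k' = u j - u k := by
      rw [StarAlgEquiv.symm_apply_apply, single_apply, Ne, ite_eq_right_iff, Classical.not_imp] at h
      rw [h.1.1, h.1.2]
    exact Submodule.subset_span ⟨x j - x k, y j - y k, sub_pos.2 hx, sub_pos.2 hy,
      lie_unitaryConj_realDiagonal_eq_smul_iff.2 hsupport,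
      lie_unitaryConj_realDiagonal_eq_smul_iff.2 hsupport⟩

omit [DecidableEq ι] in
theorem map_star_lie {θ : Matrix ι ι ℂ ≃⋆ₐ[ℂ] Matrix ι ι ℂ} {X X' : Matrix ι ι ℂ}
    (hX' : X'.IsHermitian) (hX : θ X' = -X) (z : Matrix ι ι ℂ) :
    θ (star ⁅X', z⁆) = ⁅X, θ (star z)⁆ := by
  rw [Ring.lie_def, Ring.lie_def, star_sub, star_mul, star_mul, hX'.isSelfAdjoint.star_eq, map_sub,
    map_mul, map_mul, hX]
  noncomm_ring

omit [DecidableEq ι] in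
theorem map_star_mem_raising {θ : Matrix ι ι ℂ ≃⋆ₐ[ℂ] Matrix ι ι ℂ} {X X' Y Y' z : Matrix ι ι ℂ}
    (hX' : X'.IsHermitian) (hY' : Y'.IsHermitian) (hX : θ X' = -X) (hY : θ Y' = -Y)
    (hz : z ∈ raising X' Y') : θ (star z) ∈ raising X Y := by
  induction hz using Submodule.span_induction with
  | mem z hz =>
    obtain ⟨α, γ, hα, hγ, hXz, hYz⟩ := hz
    have hlie {T T' : Matrix ι ι ℂ} {c : ℝ} (hT' : T'.IsHermitian) (hT : θ T' = -T)
        (h : ⁅T', z⁆ = (c : ℂ) • z) : ⁅T, θ (star z)⁆ = (c : ℂ) • θ (star z) := by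
      rw [← map_star_lie hT' hT, h, star_smul, map_smul, RCLike.star_def, Complex.conj_ofReal]
    exact Submodule.subset_span ⟨α, γ, hα, hγ, hlie hX' hX hXz, hlie hY' hY hYz⟩
  | zero => simp
  | add z z' _ _ hz hz' => simpa only [star_add, map_add] using add_mem hz hz'
  | smul c z _ hz => simpa only [star_smul, map_smul] using Submodule.smul_mem _ _ hz

section CommutingPair

variable {n : ℕ} {X Y y z : Matrix (Fin n) (Fin n) ℂ} (hX : X.IsHermitian) (hY : Y.IsHermitian)
  (hXY : Commute X Y)

include hX hY hXY

theorem trace_mul_eq_zero_of_mem_raising (hy : y ∈ raising X Y) (hz : z ∈ raising X Y) :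
    (y * z).trace = 0 := by
  obtain ⟨U, x, b, rfl, rfl⟩ := exists_eq_unitaryConj_realDiagonal hX hY hXY
  obtain ⟨y, rfl⟩ : ∃ y', unitaryConj U y' = y := ⟨_, (unitaryConj U).apply_symm_apply y⟩
  obtain ⟨z, rfl⟩ : ∃ z', unitaryConj U z' = z := ⟨_, (unitaryConj U).apply_symm_apply z⟩
  rw [mem_raising_iff, StarAlgEquiv.symm_apply_apply] at hy hz
  rw [← map_mul, trace_unitaryConj]
  refine Finset.sum_eq_zero fun j _ => ?_
  rw [diag_apply, mul_apply]
  refine Finset.sum_eq_zero fun k _ => ?_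
  by_contra hne
  exact lt_asymm (hy j k (left_ne_zero_of_mul hne)).1 (hz k j (right_ne_zero_of_mul hne)).1

theorem exists_mem_raising_lie_eq (hz : z ∈ raising X Y) : ∃ y ∈ raising X Y, ⁅X, y⁆ = z := by
  obtain ⟨U, x, b, rfl, rfl⟩ := exists_eq_unitaryConj_realDiagonal hX hY hXY
  obtain ⟨z, rfl⟩ : ∃ z', unitaryConj U z' = z := ⟨_, (unitaryConj U).apply_symm_apply z⟩
  rw [mem_raising_iff, StarAlgEquiv.symm_apply_apply] at hz
  refine ⟨unitaryConj U (of fun j k => z j k / (x j - x k : ℝ)), ?_, ?_⟩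
  · rw [mem_raising_iff, StarAlgEquiv.symm_apply_apply]
    exact fun j k hjk => hz j k (div_ne_zero_iff.1 hjk).1
  · rw [lie_unitaryConj_realDiagonal]
    congr 1
    ext j k
    by_cases hjk : z j k = 0
    · simp [hjk]
    · have hx : ((x j - x k : ℝ) : ℂ) ≠ 0 :=
        Complex.ofReal_ne_zero.2 (sub_pos.2 (hz j k hjk).1).ne'
      exact mul_div_cancel₀ _ hx

theorem lie_mem_raising (hz : z ∈ raising X Y) : ⁅Y, z⁆ ∈ raising X Y := by
  obtain ⟨U, x, b, rfl, rfl⟩ := exists_eq_unitaryConj_realDiagonal hX hY hXY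
  obtain ⟨z, rfl⟩ : ∃ z', unitaryConj U z' = z := ⟨_, (unitaryConj U).apply_symm_apply z⟩
  rw [lie_unitaryConj_realDiagonal]
  rw [mem_raising_iff, StarAlgEquiv.symm_apply_apply] at hz ⊢
  exact fun j k hjk => hz j k (right_ne_zero_of_mul hjk)

theorem re_trace_lie_mul_lie_conjTranspose_pos (hz : z ∈ raising X Y) (hz0 : z ≠ 0) :
    0 < (⁅Y, z⁆ * ⁅X, z⁆ᴴ).trace.re := by
  obtain ⟨U, x, b, rfl, rfl⟩ := exists_eq_unitaryConj_realDiagonal hX hY hXY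
  obtain ⟨z, rfl⟩ : ∃ z', unitaryConj U z' = z := ⟨_, (unitaryConj U).apply_symm_apply z⟩
  rw [mem_raising_iff, StarAlgEquiv.symm_apply_apply] at hz
  have hsum : (⁅unitaryConj U (realDiagonal b), unitaryConj U z⁆ *
      ⁅unitaryConj U (realDiagonal x), unitaryConj U z⁆ᴴ).trace.re =
        ∑ j, ∑ k, (b j - b k) * (x j - x k) * ‖z j k‖ ^ 2 := by
    rw [lie_unitaryConj_realDiagonal, lie_unitaryConj_realDiagonal, ← star_eq_conjTranspose,
      ← map_star, ← map_mul, trace_unitaryConj, trace, Complex.re_sum]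
    refine Finset.sum_congr rfl fun j _ => ?_
    rw [diag_apply, mul_apply, Complex.re_sum]
    refine Finset.sum_congr rfl fun k _ => ?_
    rw [star_apply, of_apply, of_apply, star_mul, RCLike.star_def, Complex.conj_ofReal,
      ← Complex.ofReal_re ((b j - b k) * (x j - x k) * ‖z j k‖ ^ 2)]
    push_cast
    rw [← Complex.mul_conj']
    ring_nf
  have hnonneg (j k : Fin n) : 0 ≤ (b j - b k) * (x j - x k) * ‖z j k‖ ^ 2 := by
    by_cases hjk : z j k = 0
    · simp [hjk]
    obtain ⟨hx, hb⟩ := hz j k hjk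
    exact mul_nonneg (mul_nonneg (sub_pos.2 hb).le (sub_pos.2 hx).le) (sq_nonneg _)
  obtain ⟨j, k, hjk⟩ : ∃ j k, z j k ≠ 0 := by
    by_contra! hzero
    exact hz0 (by rw [show z = 0 from Matrix.ext hzero, map_zero])
  obtain ⟨hx, hb⟩ := hz j k hjk
  rw [hsum]
  exact Finset.sum_pos' (fun j _ => Finset.sum_nonneg fun k _ => hnonneg j k)
    ⟨j, Finset.mem_univ j, Finset.sum_pos' (fun k _ => hnonneg j k) ⟨k, Finset.mem_univ k,
      mul_pos (mul_pos (sub_pos.2 hb) (sub_pos.2 hx)) (pow_pos (norm_pos_iff.2 hjk) 2)⟩⟩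

theorem injOn_lie_raising :
    Set.InjOn (fun z => ⁅X, z⁆) (raising X Y : Set (Matrix (Fin n) (Fin n) ℂ)) := by
  intro y hy z hz hyz
  by_contra hne
  have hpos := re_trace_lie_mul_lie_conjTranspose_pos hX hY hXY (sub_mem hy hz) (sub_ne_zero.2 hne)
  have hlie : ⁅X, y - z⁆ = 0 := by
    rw [← sub_eq_zero.2 hyz]
    simp only [Ring.lie_def]
    noncomm_ring
  rw [hlie] at hpos
  simp at hpos

theorem re_trace_mul_lie_lie_of_mem_raising (hy : y ∈ raising X Y) :
    (Y * ⁅star y - y, ⁅star y - y, X⁆⁆).trace.re = -(2 * (⁅Y, y⁆ * ⁅X, y⁆ᴴ).trace.re) := by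
  have hlie {T : Matrix (Fin n) (Fin n) ℂ} (hT : T.IsHermitian) :
      ⁅star y - y, T⁆ = ⁅T, y⁆ + ⁅T, y⁆ᴴ := by
    rw [Ring.lie_def, Ring.lie_def, conjTranspose_sub, conjTranspose_mul, conjTranspose_mul, hT.eq,
      star_eq_conjTranspose]
    noncomm_ring
  have hskew : ⁅Y, star y - y⁆ = -⁅star y - y, Y⁆ := (neg_sub _ _).symm
  have hzero : (⁅Y, y⁆ * ⁅X, y⁆).trace = 0 :=
    trace_mul_eq_zero_of_mem_raising hX hY hXY (lie_mem_raising hX hY hXY hy) <|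
      raising_comm Y X ▸ lie_mem_raising hY hX hXY.symm (raising_comm X Y ▸ hy)
  have hzero' : (⁅Y, y⁆ᴴ * ⁅X, y⁆ᴴ).trace = 0 := by
    rw [← conjTranspose_mul, trace_conjTranspose, trace_mul_comm, hzero, star_zero]
  have hstar : (⁅Y, y⁆ᴴ * ⁅X, y⁆).trace.re = (⁅Y, y⁆ * ⁅X, y⁆ᴴ).trace.re := by
    rw [← conjTranspose_conjTranspose ⁅X, y⁆, ← conjTranspose_mul, trace_conjTranspose,
      trace_mul_comm, RCLike.star_def, Complex.conj_re, conjTranspose_conjTranspose]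
  rw [trace_mul_lie, hskew, hlie hX, hlie hY, neg_mul, trace_neg, add_mul, mul_add, mul_add,
    trace_add, trace_add, trace_add, hzero, hzero', Complex.neg_re]
  simp only [zero_add, add_zero, Complex.add_re, hstar]
  ring

end CommutingPair

end Raising

section SumOfConjugates

variable {n : ℕ} {κ : Type*} [Fintype κ]

theorem eq_zero_of_sum_indicator_nonpos {ι : Type*} [Fintype ι] {y : ι → ℝ} (hy : ∑ j, y j = 0)
    (hpos : ∑ j, {j | 0 < y j}.indicator y j ≤ 0) : y = 0 := by
  have hnonneg : 0 ≤ {j | 0 < y j}.indicator y := Set.indicator_nonneg fun j hj => le_of_lt hj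
  have hle : y ≤ 0 := by
    intro j
    by_contra! hj
    have hj' := (Finset.sum_eq_zero_iff_of_nonneg fun j _ => hnonneg j).1
      (hpos.antisymm (Finset.sum_nonneg fun j _ => hnonneg j)) j (Finset.mem_univ j)
    rw [Set.indicator_of_mem (show j ∈ {j | 0 < y j} from hj)] at hj'
    exact hj.ne' hj'
  exact funext fun j =>
    (Finset.sum_eq_zero_iff_of_nonpos fun j _ => hle j).1 hy j (Finset.mem_univ j)

theorem trace_unitaryConj_realDiagonal_mul {ι : Type*} [Fintype ι] [DecidableEq ι]
    (U : unitaryGroup ι ℂ) (d x : ι → ℝ) :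
    (unitaryConj U (realDiagonal d) * unitaryConj U (realDiagonal x)).trace =
      (∑ j, d j * x j : ℝ) := by
  rw [← map_mul, trace_unitaryConj, realDiagonal, realDiagonal, diagonal_mul_diagonal,
    trace_diagonal]
  push_cast
  rfl

theorem mem_raising_of_mul_eq_zero {ι : Type*} [Fintype ι] [DecidableEq ι]
    {U : unitaryGroup ι ℂ} {x y : ι → ℝ} {Q z : Matrix ι ι ℂ}
    (hQ : Q = unitaryConj U (realDiagonal ({j | 0 < y j}.indicator 1))) (hzQ : z * Q = 0)
    (hQz : Q * z = z) (hz : ∀ b ∈ flagSubalgebra U x, (z * b).trace = 0) :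
    z ∈ raising (unitaryConj U (realDiagonal x)) (unitaryConj U (realDiagonal y)) := by
  refine mem_raising_iff.2 fun j k hjk => ?_
  have hx : x k < x j := lt_of_not_ge fun hle =>
    hjk (apply_eq_zero_of_trace_mul_flagSubalgebra_eq_zero hz hle)
  obtain ⟨z, rfl⟩ : ∃ z', unitaryConj U z' = z := ⟨_, (unitaryConj U).apply_symm_apply z⟩
  rw [hQ, ← map_mul, map_eq_zero_iff _ (EquivLike.injective _)] at hzQ
  rw [hQ, ← map_mul, (EquivLike.injective _).eq_iff] at hQz
  rw [StarAlgEquiv.symm_apply_apply] at hjk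
  have hk := congrFun₂ hzQ j k
  have hj := congrFun₂ hQz j k
  rw [mul_realDiagonal_apply] at hk
  rw [realDiagonal_mul_apply] at hj
  have hyk : ¬0 < y k := fun hyk => by simp [hyk, hjk] at hk
  have hyj : 0 < y j := by
    by_contra hyj
    simp [hyj, hjk.symm] at hj
  exact ⟨hx, (not_lt.1 hyk).trans_lt hyj⟩

theorem re_trace_mul_sum_nonpos_of_mem_adaptedFrames {ι : Type*} [Fintype ι] [DecidableEq ι]
    {X : κ → Matrix ι ι ℂ} {Q : Matrix ι ι ℂ} {U : κ → unitaryGroup ι ℂ} {x d : κ → ι → ℝ}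
    (hX : ∀ i, X i = unitaryConj (U i) (realDiagonal (x i)))
    (hQ : ∀ i, Q = unitaryConj (U i) (realDiagonal (d i))) (hd : ∀ i, 0 ≤ d i)
    {w : κ → unitaryGroup ι ℂ} (hw : ∑ i, unitaryConj (w i) (X i) = 0)
    (hframes : (fun i => (star (w i) : Matrix ι ι ℂ)) ∈
      adaptedFrames Q fun i => flagSubalgebra (U i) (x i)) :
    (Q * ∑ i, X i).trace.re ≤ 0 := by
  obtain ⟨V, hV, hVQ⟩ := hframes
  obtain _ | ⟨⟨i₀⟩⟩ := isEmpty_or_nonempty κ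
  · simp
  have hle (i : κ) : (Q * X i).trace.re ≤
      (V i₀ * Q * star (V i₀) * unitaryConj (w i) (X i)).trace.re := by
    let m : unitaryGroup ι ℂ := star (w i) * V i
    have hconj : (Q * ((m : Matrix ι ι ℂ)ᴴ * X i * m)).trace =
        (V i₀ * Q * star (V i₀) * unitaryConj (w i) (X i)).trace := by
      rw [hV i₀ i, unitaryConj_apply, mul_assoc (V i * Q : Matrix ι ι ℂ), mul_assoc (V i).1,
        trace_mul_comm (V i).1]
      simp only [m, Submonoid.coe_mul, conjTranspose_mul, Unitary.coe_star, star_eq_conjTranspose,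
        conjTranspose_conjTranspose, mul_assoc]
    rw [← hconj]
    have hmQ := hVQ i
    rw [hQ i] at hmQ ⊢
    rw [hX i]
    exact re_trace_mul_le_of_mul_mem_flagSubalgebra (hd i) m.2 hmQ
  calc (Q * ∑ i, X i).trace.re = ∑ i, (Q * X i).trace.re := by
        rw [Finset.mul_sum, trace_sum, Complex.re_sum]
    _ ≤ ∑ i, (V i₀ * Q * star (V i₀) * unitaryConj (w i) (X i)).trace.re :=
        Finset.sum_le_sum fun i _ => hle i
    _ = 0 := by rw [← Complex.re_sum, ← trace_sum, ← Finset.mul_sum, hw, mul_zero, trace_zero,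
      Complex.zero_re]

theorem sum_eq_zero_of_sum_unitaryConj_eq_zero {X : κ → Matrix (Fin n) (Fin n) ℂ}
    (hX : ∀ i, (X i).IsHermitian) (hcomm : ∀ i, Commute (X i) (∑ k, X k))
    (hinj : ∀ z : κ → Matrix (Fin n) (Fin n) ℂ, (∀ i, z i ∈ raising (X i) (∑ k, X k)) →
      ∑ i, z i = 0 → z = 0)
    {w : κ → unitaryGroup (Fin n) ℂ} (hw : ∑ i, unitaryConj (w i) (X i) = 0) : ∑ i, X i = 0 := by
  obtain _ | ⟨⟨i₀⟩⟩ := isEmpty_or_nonempty κ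
  · simp
  have hβ : (∑ i, X i).IsHermitian := isSelfAdjoint_sum _ fun i _ => hX i
  choose U x y hx hy hlower hanti using fun i =>
    exists_sorted_unitaryConj_realDiagonal (hX i) hβ (hcomm i)
  let d (i : κ) : Fin n → ℝ := {j | 0 < y i j}.indicator 1
  let Q := unitaryConj (U i₀) (realDiagonal (d i₀))
  have hQU (i : κ) : Q = unitaryConj (U i) (realDiagonal (d i)) :=
    unitaryConj_realDiagonal_comp ((hy i₀).symm.trans (hy i)) ((Set.Ioi 0).indicator 1)
  have hQ : IsStarProjection Q := (isStarProjection_realDiagonal_indicator _).map _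
  have hframes : adaptedFrames Q (fun i => flagSubalgebra (U i) (x i)) = Set.univ := by
    refine adaptedFrames_eq_univ hQ (fun i => exists_mul_mem_unitaryGroup_of_isLowerSet (U i)
      (hlower i) (hanti i) hQ.isIdempotentElem (hQU i)) fun z hzQ hz => hinj z fun i => ?_
    rw [hx i, hy i]
    exact mem_raising_of_mul_eq_zero (hQU i) (hzQ i).1 (hzQ i).2 (hz i)
  have hpos : (Q * ∑ i, X i).trace.re ≤ 0 :=
    re_trace_mul_sum_nonpos_of_mem_adaptedFrames hx hQU
      (fun i => Set.indicator_nonneg fun _ _ => zero_le_one) hw (hframes ▸ Set.mem_univ _)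
  have htrace : (∑ i, X i).trace = 0 := by
    simpa only [trace_sum, trace_unitaryConj, trace_zero] using congrArg trace hw
  rw [hy i₀, trace_unitaryConj_realDiagonal_mul, Complex.ofReal_re] at hpos
  rw [hy i₀, trace_unitaryConj, realDiagonal, trace_diagonal] at htrace
  have hy0 : y i₀ = 0 := eq_zero_of_sum_indicator_nonpos (mod_cast htrace) <| by
    simpa [d, Set.indicator_apply] using hpos
  rw [hy i₀, hy0]
  simp [realDiagonal]

end SumOfConjugates

section Variation

theorem eq_zero_and_nonneg_of_hasDerivAt_of_forall_le {F F' : ℝ → ℝ} {F'' : ℝ}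
    (hF : ∀ t, HasDerivAt F (F' t) t) (hF' : HasDerivAt F' F'' 0) (hmin : ∀ t, F 0 ≤ F t) :
    F' 0 = 0 ∧ 0 ≤ F'' := by
  have hF'0 : F' 0 = 0 := IsLocalMin.hasDerivAt_eq_zero (.of_forall hmin) (hF 0)
  refine ⟨hF'0, ?_⟩
  by_contra! hneg
  have hderiv : deriv F = F' := funext fun t => (hF t).deriv
  have hmax : IsLocalMax F 0 :=
    isLocalMax_of_deriv_deriv_neg (by rwa [hderiv, hF'.deriv]) (by rw [hderiv, hF'0])
      (hF 0).continuousAt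
  have hconst : F =ᶠ[nhds 0] fun _ => F 0 :=
    hmax.mono fun t ht => ht.antisymm (hmin t)
  have hF'' : F'' = 0 := by
    rw [← hF'.deriv, ← hderiv, hconst.deriv.deriv_eq]
    simp
  exact hneg.ne hF''

variable {ι κ : Type*} [Fintype ι] [DecidableEq ι]

omit [DecidableEq ι] in
open scoped Matrix.Norms.L2Operator in
theorem hasDerivAt_re_trace {M : ℝ → Matrix ι ι ℂ} {M' : Matrix ι ι ℂ} {t : ℝ}
    (h : HasDerivAt M M' t) : HasDerivAt (fun t => (M t).trace.re) M'.trace.re t := by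
  classical
  exact (Complex.reLm ∘ₗ traceLinearMap ι ℝ ℂ).toContinuousLinearMap.hasFDerivAt.comp_hasDerivAt t h

omit [DecidableEq ι] in
open scoped Matrix.Norms.L2Operator in
theorem re_trace_mul_eq_zero_and_nonneg_of_forall_le {Φ Φ' : ℝ → Matrix ι ι ℂ}
    {Φ'' : Matrix ι ι ℂ} (hΦ : ∀ t, HasDerivAt Φ (Φ' t) t) (hΦ' : HasDerivAt Φ' Φ'' 0)
    (hmin : ∀ t, (Φ 0 * Φ 0).trace.re ≤ (Φ t * Φ t).trace.re) :
    (Φ 0 * Φ' 0).trace.re = 0 ∧ (Φ' 0 = 0 → 0 ≤ (Φ 0 * Φ'').trace.re) := by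
  classical
  obtain ⟨hfirst, hsecond⟩ := eq_zero_and_nonneg_of_hasDerivAt_of_forall_le
    (fun t => hasDerivAt_re_trace ((hΦ t).mul (hΦ t)))
    (hasDerivAt_re_trace ((hΦ'.mul (hΦ 0)).add ((hΦ 0).mul hΦ'))) hmin
  rw [trace_add, trace_mul_comm (Φ' 0), Complex.add_re] at hfirst
  refine ⟨by linarith, fun hzero => ?_⟩
  simp only [hzero, trace_add, trace_mul_comm Φ'', Complex.add_re, mul_zero, trace_zero,
    Complex.zero_re] at hsecond
  linarith

/-- The exponential of a skew-Hermitian matrix, as an element of the unitary group. -/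
noncomputable def expUnitary (ξ : skewAdjoint (Matrix ι ι ℂ)) : unitaryGroup ι ℂ :=
  ⟨NormedSpace.exp ξ, by
    rw [mem_unitaryGroup_iff, star_eq_conjTranspose, ← exp_conjTranspose, ← star_eq_conjTranspose,
      skewAdjoint.mem_iff.1 ξ.2, ← exp_add_of_commute _ _ (Commute.refl ξ.1).neg_right,
      add_neg_cancel, NormedSpace.exp_zero]⟩

open scoped Matrix.Norms.L2Operator in
theorem hasDerivAt_unitaryConj_expUnitary (ξ : skewAdjoint (Matrix ι ι ℂ)) (X : Matrix ι ι ℂ)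
    (t : ℝ) : HasDerivAt (fun t : ℝ => unitaryConj (expUnitary (t • ξ)) X)
      ⁅(ξ : Matrix ι ι ℂ), unitaryConj (expUnitary (t • ξ)) X⁆ t := by
  have hexp := hasDerivAt_exp_smul_const' (𝕂 := ℝ) (ξ : Matrix ι ι ℂ) t
  refine ((hexp.mul_const X).mul hexp.star).congr_deriv ?_
  rw [Ring.lie_def, unitaryConj_apply, star_mul, skewAdjoint.mem_iff.1 ξ.2]
  simp only [expUnitary, skewAdjoint.val_smul, mul_neg, mul_assoc, sub_eq_add_neg]

omit [DecidableEq ι] in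
theorem continuous_starAlgEquiv (θ : Matrix ι ι ℂ ≃⋆ₐ[ℂ] Matrix ι ι ℂ) : Continuous θ := by
  classical
  exact LinearMap.continuous_of_finiteDimensional θ.toAlgEquiv.toLinearMap

open scoped Matrix.Norms.Operator in
theorem map_expUnitary (θ : Matrix ι ι ℂ ≃⋆ₐ[ℂ] Matrix ι ι ℂ) {ξ η : skewAdjoint (Matrix ι ι ℂ)}
    (h : θ ξ = η) : θ (expUnitary ξ) = expUnitary η :=
  (NormedSpace.map_exp θ (continuous_starAlgEquiv θ) ξ.1).trans (congrArg NormedSpace.exp h)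

/-- The families of unitary matrices which are fixed by the action of `θ` on the matrices combined
with the action of `σ` on the index set. -/
def symmetricUnitaries (θ : Matrix ι ι ℂ ≃⋆ₐ[ℂ] Matrix ι ι ℂ) (σ : κ → κ) :
    Subgroup (κ → unitaryGroup ι ℂ) where
  carrier := {v | ∀ i, θ (v (σ i)) = v i}
  one_mem' _ := map_one θ
  mul_mem' {v w} hv hw i := by
    simp only [Pi.mul_apply, Submonoid.coe_mul, map_mul, hv i, hw i]
  inv_mem' {v} hv i := by
    simp only [Pi.inv_apply, ← Unitary.star_eq_inv, Unitary.coe_star, map_star, hv i]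

variable {θ : Matrix ι ι ℂ ≃⋆ₐ[ℂ] Matrix ι ι ℂ} {σ : κ → κ}

theorem map_unitaryConj_of_mem_symmetricUnitaries {v : κ → unitaryGroup ι ℂ}
    (hv : v ∈ symmetricUnitaries θ σ) (i : κ) (x : Matrix ι ι ℂ) :
    θ (unitaryConj (v (σ i)) x) = unitaryConj (v i) (θ x) := by
  rw [unitaryConj_apply, unitaryConj_apply, map_mul, map_mul, map_star, hv i]

open scoped Matrix.Norms.L2Operator in
theorem first_and_second_variation [Fintype κ] {X : κ → Matrix ι ι ℂ}
    (hmin : ∀ v ∈ symmetricUnitaries θ σ, ((∑ i, X i) * ∑ i, X i).trace.re ≤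
      ((∑ i, unitaryConj (v i) (X i)) * ∑ i, unitaryConj (v i) (X i)).trace.re)
    {ξ : κ → Matrix ι ι ℂ} (hξ : ∀ i, ξ i ∈ skewAdjoint (Matrix ι ι ℂ))
    (hθ : ∀ i, θ (ξ (σ i)) = ξ i) :
    ((∑ i, X i) * ∑ i, ⁅ξ i, X i⁆).trace.re = 0 ∧
      (∑ i, ⁅ξ i, X i⁆ = 0 → 0 ≤ ((∑ i, X i) * ∑ i, ⁅ξ i, ⁅ξ i, X i⁆⁆).trace.re) := by
  lift ξ to κ → skewAdjoint (Matrix ι ι ℂ) using hξ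
  have hexp (t : ℝ) : (fun i => expUnitary (t • ξ i)) ∈ symmetricUnitaries θ σ := fun i =>
    map_expUnitary θ <| by
      rw [skewAdjoint.val_smul, skewAdjoint.val_smul, ← Complex.coe_smul, map_smul,
        Complex.coe_smul]
      exact congrArg (t • ·) (hθ i)
  have hconj (i : κ) (t : ℝ) := hasDerivAt_unitaryConj_expUnitary (ξ i) (X i) t
  have hone (i : κ) : unitaryConj (expUnitary ((0 : ℝ) • ξ i)) (X i) = X i := by
    rw [show expUnitary ((0 : ℝ) • ξ i) = 1 from Subtype.ext (by simp [expUnitary]), map_one]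
    rfl
  have hlie (i : κ) := ((hconj i 0).const_mul (ξ i : Matrix ι ι ℂ)).sub
    ((hconj i 0).mul_const (ξ i : Matrix ι ι ℂ))
  have hvar := re_trace_mul_eq_zero_and_nonneg_of_forall_le
    (fun t => HasDerivAt.fun_sum fun i _ => hconj i t) (HasDerivAt.fun_sum fun i _ => hlie i)
    (by simpa only [hone] using fun t => hmin _ (hexp t))
  simpa only [hone, ← Ring.lie_def] using hvar

end Variation

section SymmetricMinimum

variable {n : ℕ} {κ : Type*} [Fintype κ]
  {θ : Matrix (Fin n) (Fin n) ℂ ≃⋆ₐ[ℂ] Matrix (Fin n) (Fin n) ℂ} {σ : κ → κ}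
  {X : κ → Matrix (Fin n) (Fin n) ℂ}

theorem map_sum_eq_neg_sum (hσ : Function.Involutive σ) (hθX : ∀ i, θ (X (σ i)) = -X i) :
    θ (∑ i, X i) = -∑ i, X i := by
  rw [← hσ.bijective.sum_comp X, map_sum, Finset.sum_congr rfl fun i _ => hθX i,
    Finset.sum_neg_distrib, hσ.bijective.sum_comp X]

section

variable (hσ : Function.Involutive σ) (hX : ∀ i, (X i).IsHermitian)
  (hθX : ∀ i, θ (X (σ i)) = -X i)
  (hmin : ∀ v ∈ symmetricUnitaries θ σ, ((∑ i, X i) * ∑ i, X i).trace.re ≤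
    ((∑ i, unitaryConj (v i) (X i)) * ∑ i, unitaryConj (v i) (X i)).trace.re)

include hσ hX hθX hmin

open scoped ComplexOrder in
theorem commute_sum_of_forall_symmetricUnitaries_le (i : κ) : Commute (X i) (∑ i, X i) := by
  have hβ : (∑ i, X i).IsHermitian := isSelfAdjoint_sum _ fun i _ => hX i
  have hθβ : θ (∑ i, X i) = -∑ i, X i := map_sum_eq_neg_sum hσ hθX
  have hstar (i : κ) : star ⁅X i, ∑ i, X i⁆ = -⁅X i, ∑ i, X i⁆ := by
    rw [Ring.lie_def, star_sub, star_mul, star_mul, hβ.isSelfAdjoint.star_eq,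
      (hX i).isSelfAdjoint.star_eq, neg_sub]
  have hfirst := (first_and_second_variation hmin (ξ := fun i => ⁅X i, ∑ i, X i⁆) hstar fun i => by
    rw [Ring.lie_def, Ring.lie_def, map_sub, map_mul, map_mul, hθX, hθβ, neg_mul_neg,
      neg_mul_neg]).1
  have hnonneg (i : κ) : 0 ≤ (⁅X i, ∑ i, X i⁆ * ⁅X i, ∑ i, X i⁆ᴴ).trace :=
    (posSemidef_self_mul_conjTranspose _).trace_nonneg
  have hterm (i : κ) : ((∑ i, X i) * ⁅⁅X i, ∑ i, X i⁆, X i⁆).trace =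
      -(⁅X i, ∑ i, X i⁆ * ⁅X i, ∑ i, X i⁆ᴴ).trace := by
    have hskew : ⁅⁅X i, ∑ i, X i⁆, X i⁆ = ⁅X i, -⁅X i, ∑ i, X i⁆⁆ := by
      rw [Ring.lie_def, Ring.lie_def (X i) (-_)]
      noncomm_ring
    have hskew' : ⁅∑ i, X i, X i⁆ = -⁅X i, ∑ i, X i⁆ := (neg_sub _ _).symm
    rw [hskew, trace_mul_lie, hskew', neg_mul_neg, ← star_eq_conjTranspose, hstar, mul_neg,
      trace_neg, neg_neg]
  have hsum : ∑ i, (⁅X i, ∑ i, X i⁆ * ⁅X i, ∑ i, X i⁆ᴴ).trace = 0 := by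
    refine Complex.ext ?_ (Complex.le_def.1 (Finset.sum_nonneg fun i _ => hnonneg i)).2.symm
    rw [Finset.mul_sum, trace_sum, Finset.sum_congr rfl fun i _ => hterm i,
      Finset.sum_neg_distrib, Complex.neg_re, neg_eq_zero] at hfirst
    exact hfirst
  have hlie := (Finset.sum_eq_zero_iff_of_nonneg fun i _ => hnonneg i).1 hsum i (Finset.mem_univ i)
  exact commute_iff_lie_eq.2 (trace_mul_conjTranspose_self_eq_zero_iff.1 hlie)

theorem eq_zero_of_mem_raising_of_map_star_eq_neg {z : κ → Matrix (Fin n) (Fin n) ℂ}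
    (hz : ∀ i, z i ∈ raising (X i) (∑ i, X i)) (hsum : ∑ i, z i = 0)
    (hθz : ∀ i, θ (star (z (σ i))) = -z i) : z = 0 := by
  have hcomm := commute_sum_of_forall_symmetricUnitaries_le hσ hX hθX hmin
  have hβ : (∑ i, X i).IsHermitian := isSelfAdjoint_sum _ fun i _ => hX i
  have hθβ : θ (∑ i, X i) = -∑ i, X i := map_sum_eq_neg_sum hσ hθX
  choose y hy hyz using fun i => exists_mem_raising_lie_eq (hX i) hβ (hcomm i) (hz i)
  have hθy (i : κ) : θ (star (y (σ i))) = -y i := by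
    refine injOn_lie_raising (hX i) hβ (hcomm i)
      (map_star_mem_raising (hX (σ i)) hβ (hθX i) hθβ (hy (σ i))) (neg_mem (hy i)) ?_
    change ⁅X i, θ (star (y (σ i)))⁆ = ⁅X i, -y i⁆
    rw [← map_star_lie (hX (σ i)) (hθX i), hyz, hθz, ← hyz i, Ring.lie_def, Ring.lie_def]
    noncomm_ring
  have hskew (i : κ) : star (y i) - y i ∈ skewAdjoint (Matrix (Fin n) (Fin n) ℂ) := by
    rw [skewAdjoint.mem_iff, star_sub, star_star, neg_sub]
  have hθξ (i : κ) : θ (star (y (σ i)) - y (σ i)) = star (y i) - y i := by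
    rw [map_sub, hθy, ← star_star (y (σ i)), map_star, hθy, star_neg]
    abel
  have hlie (i : κ) : ⁅star (y i) - y i, X i⁆ = z i + star (z i) := by
    rw [← hyz i, Ring.lie_def, Ring.lie_def, star_sub, star_mul, star_mul,
      (hX i).isSelfAdjoint.star_eq]
    noncomm_ring
  have hsecond := (first_and_second_variation hmin hskew hθξ).2 <| by
    rw [Finset.sum_congr rfl fun i _ => hlie i, Finset.sum_add_distrib, ← star_sum, hsum, star_zero,
      add_zero]
  rw [Finset.mul_sum, trace_sum, Complex.re_sum, Finset.sum_congr rfl fun i _ =>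
    re_trace_mul_lie_lie_of_mem_raising (hX i) hβ (hcomm i) (hy i)] at hsecond
  have hpos (i : κ) (hyi : y i ≠ 0) :=
    re_trace_lie_mul_lie_conjTranspose_pos (hX i) hβ (hcomm i) (hy i) hyi
  funext i
  by_contra hzi
  have hyi : y i ≠ 0 := fun h => hzi <| by
    rw [← hyz i, h, Ring.lie_def, mul_zero, zero_mul, sub_zero, Pi.zero_apply]
  have hnonneg (i : κ) : 0 ≤ (⁅∑ i, X i, y i⁆ * ⁅X i, y i⁆ᴴ).trace.re := by
    by_cases hyi : y i = 0
    · simp [hyi, Ring.lie_def]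
    · exact (hpos i hyi).le
  have hpos_sum := Finset.sum_pos' (fun i _ => hnonneg i) ⟨i, Finset.mem_univ i, hpos i hyi⟩
  rw [Finset.sum_neg_distrib, ← Finset.mul_sum] at hsecond
  linarith

theorem eq_zero_of_mem_raising_of_sum_eq_zero (hθ : Function.Involutive θ)
    {z : κ → Matrix (Fin n) (Fin n) ℂ} (hz : ∀ i, z i ∈ raising (X i) (∑ i, X i))
    (hsum : ∑ i, z i = 0) : z = 0 := by
  have hβ : (∑ i, X i).IsHermitian := isSelfAdjoint_sum _ fun i _ => hX i
  have hfixed {z : κ → Matrix (Fin n) (Fin n) ℂ} (hz : ∀ i, z i ∈ raising (X i) (∑ i, X i))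
      (hsum : ∑ i, z i = 0) (i : κ) : z i = θ (star (z (σ i))) := by
    refine sub_eq_zero.1 (congrFun (eq_zero_of_mem_raising_of_map_star_eq_neg hσ hX hθX hmin
      (z := fun i => z i - θ (star (z (σ i)))) (fun i => sub_mem (hz i) ?_) ?_ fun i => ?_) i)
    · exact map_star_mem_raising (hX (σ i)) hβ (hθX i) (map_sum_eq_neg_sum hσ hθX) (hz (σ i))
    · rw [Finset.sum_sub_distrib, ← map_sum, ← star_sum, hσ.bijective.sum_comp z, hsum,
        star_zero, map_zero, sub_zero]
    · rw [hσ i, star_sub, map_sub, ← map_star, star_star, hθ, neg_sub]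
  funext i
  -- `z ↦ θ (star z)` is antilinear, so a family fixed together with `Complex.I • z` is zero.
  have hI := hfixed (z := fun i => Complex.I • z i) (fun i => Submodule.smul_mem _ _ (hz i))
    (by rw [← Finset.smul_sum, hsum, smul_zero]) i
  rw [star_smul, map_smul, ← hfixed hz hsum i, RCLike.star_def, Complex.conj_I, neg_smul,
    eq_neg_iff_add_eq_zero, ← two_smul ℂ, smul_smul, smul_eq_zero] at hI
  exact hI.resolve_left (by simp)

end

theorem exists_mem_symmetricUnitaries_sum_eq_zero (hθ : Function.Involutive θ)
    (hσ : Function.Involutive σ) (hX : ∀ i, (X i).IsHermitian) (hθX : ∀ i, θ (X (σ i)) = -X i)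
    {w : κ → unitaryGroup (Fin n) ℂ} (hw : ∑ i, unitaryConj (w i) (X i) = 0) :
    ∃ v ∈ symmetricUnitaries θ σ, ∑ i, unitaryConj (v i) (X i) = 0 := by
  have hclosed : IsClosed (symmetricUnitaries θ σ : Set (κ → unitaryGroup (Fin n) ℂ)) := by
    have hcont := continuous_starAlgEquiv θ
    change IsClosed {v : κ → unitaryGroup (Fin n) ℂ | ∀ i, θ (v (σ i)) = v i}
    rw [Set.ofPred_forall]
    exact isClosed_iInter fun i => isClosed_eq (by fun_prop) (by fun_prop)
  have hcont : Continuous fun v : κ → unitaryGroup (Fin n) ℂ => ∑ i, unitaryConj (v i) (X i) := by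
    simp only [unitaryConj_apply]
    fun_prop
  obtain ⟨v, hv, hmin⟩ := hclosed.isCompact.exists_isMinOn ⟨1, one_mem _⟩
    (Complex.continuous_re.comp (hcont.mul hcont).matrix_trace).continuousOn
  have hX' (i : κ) : (unitaryConj (v i) (X i)).IsHermitian :=
    (hX i).isSelfAdjoint.map (unitaryConj (v i))
  have hθX' (i : κ) : θ (unitaryConj (v (σ i)) (X (σ i))) = -unitaryConj (v i) (X i) := by
    rw [map_unitaryConj_of_mem_symmetricUnitaries hv, hθX, map_neg]
  have hmin' (u) (hu : u ∈ symmetricUnitaries θ σ) :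
      ((∑ i, unitaryConj (v i) (X i)) * ∑ i, unitaryConj (v i) (X i)).trace.re ≤
        ((∑ i, unitaryConj (u i) (unitaryConj (v i) (X i))) *
          ∑ i, unitaryConj (u i) (unitaryConj (v i) (X i))).trace.re := by
    simpa using hmin (mul_mem hu hv)
  refine ⟨v, hv, sum_eq_zero_of_sum_unitaryConj_eq_zero hX'
    (commute_sum_of_forall_symmetricUnitaries_le hσ hX' hθX' hmin')
    (fun z hz hsum => eq_zero_of_mem_raising_of_sum_eq_zero hσ hX' hθX' hmin' hθ hz hsum)
    (w := w * v⁻¹) ?_⟩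
  simpa only [Pi.mul_apply, Pi.inv_apply, ← StarAlgEquiv.mul_apply, ← map_mul,
    inv_mul_cancel_right] using hw

theorem exists_unitaryConj_sub_map_unitaryConj_eq (hθ : Function.Involutive θ)
    {A S : Matrix (Fin n) (Fin n) ℂ} (hA : A.IsHermitian) (hS : S.IsHermitian) (hθS : θ S = -S)
    {a b : unitaryGroup (Fin n) ℂ} (h : unitaryConj a A - unitaryConj b (θ A) = S) :
    ∃ u k : unitaryGroup (Fin n) ℂ, unitaryConj u A - θ (unitaryConj u A) = unitaryConj k S := by
  let σ := Equiv.swap (0 : Fin 3) 1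
  have hσ : Function.Involutive σ := DFunLike.congr_fun (Equiv.swap_swap 0 1)
  let X : Fin 3 → Matrix (Fin n) (Fin n) ℂ := ![A, -θ A, -S]
  have hX (i : Fin 3) : (X i).IsHermitian := by
    fin_cases i
    · exact hA
    · exact (hA.isSelfAdjoint.map θ).neg
    · exact hS.neg
  have hθX (i : Fin 3) : θ (X (σ i)) = -X i := by
    fin_cases i
    · exact (map_neg θ (θ A)).trans (congrArg Neg.neg (hθ A))
    · exact (neg_neg (θ A)).symm
    · exact (map_neg θ S).trans (congrArg Neg.neg hθS)
  obtain ⟨v, hv, hsum⟩ := exists_mem_symmetricUnitaries_sum_eq_zero hθ hσ hX hθX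
    (w := ![a, b, 1]) (by simp [Fin.sum_univ_three, X, ← h, sub_eq_add_neg])
  refine ⟨v 0, v 2, ?_⟩
  have hθA : θ (unitaryConj (v 0) A) = unitaryConj (v 1) (θ A) :=
    map_unitaryConj_of_mem_symmetricUnitaries hv 1 A
  simp only [Fin.sum_univ_three, X, cons_val, map_neg, ← hθA] at hsum
  rw [← sub_eq_zero, ← hsum]
  abel

end SymmetricMinimum

section Eigenvalues

variable {k : ℕ}

theorem eigVec_eq_comp {X : Matrix (Fin k) (Fin k) ℂ} (hX : X.IsHermitian) :
    eigVec X hX = hX.eigenvalues ∘ (Fin.revPerm.trans (Tuple.sort hX.eigenvalues)) :=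
  rfl

theorem eigVec_congr {X Y : Matrix (Fin k) (Fin k) ℂ} (hX : X.IsHermitian) (hY : Y.IsHermitian)
    (h : X = Y) : eigVec X hX = eigVec Y hY := by
  subst h
  rfl

theorem eigVec_antitone {X : Matrix (Fin k) (Fin k) ℂ} (hX : X.IsHermitian) :
    Antitone (eigVec X hX) :=
  fun _ _ hij => Tuple.monotone_sort hX.eigenvalues (Fin.rev_le_rev.2 hij)

theorem charpoly_eq_prod_eigVec {X : Matrix (Fin k) (Fin k) ℂ} (hX : X.IsHermitian) :
    X.charpoly = ∏ i, (Polynomial.X - Polynomial.C (eigVec X hX i : ℂ)) := by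
  rw [hX.charpoly_eq, eigVec_eq_comp]
  exact (Equiv.prod_comp (Fin.revPerm.trans (Tuple.sort hX.eigenvalues))
    fun i => Polynomial.X - Polynomial.C (hX.eigenvalues i : ℂ)).symm

theorem eq_of_antitone_of_map_univ_eq {f g : Fin k → ℝ} (hf : Antitone f) (hg : Antitone g)
    (h : Finset.univ.val.map f = Finset.univ.val.map g) : f = g := by
  rw [Fin.univ_val_map, Fin.univ_val_map, Multiset.coe_eq_coe] at h
  exact List.ofFn_injective (h.eq_of_pairwise' hf.sortedGE_ofFn.pairwise hg.sortedGE_ofFn.pairwise)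

theorem eigVec_eq_of_charpoly_eq {X : Matrix (Fin k) (Fin k) ℂ} (hX : X.IsHermitian)
    {d : Fin k → ℝ} (hd : Antitone d)
    (h : X.charpoly = ∏ i, (Polynomial.X - Polynomial.C (d i : ℂ))) : eigVec X hX = d := by
  refine eq_of_antitone_of_map_univ_eq (eigVec_antitone hX) hd ?_
  have hroots (f : Fin k → ℝ) : (∏ i, (Polynomial.X - Polynomial.C (f i : ℂ))).roots =
      (Finset.univ.val.map f).map ((↑) : ℝ → ℂ) := by
    rw [Polynomial.roots_prod _ _ (by simp [Finset.prod_ne_zero_iff, Polynomial.X_sub_C_ne_zero])]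
    simp [Function.comp_def]
  rw [charpoly_eq_prod_eigVec hX] at h
  have hmap := congrArg Polynomial.roots h
  rw [hroots, hroots] at hmap
  exact Multiset.map_injective Complex.ofReal_injective hmap

theorem charpoly_unitaryConj (U : unitaryGroup (Fin k) ℂ) (X : Matrix (Fin k) (Fin k) ℂ) :
    (unitaryConj U X).charpoly = X.charpoly := by
  rw [unitaryConj_apply, charpoly_mul_comm, ← mul_assoc, Unitary.coe_star_mul_self, one_mul]

theorem eigVec_unitaryConj (U : unitaryGroup (Fin k) ℂ) {X Y : Matrix (Fin k) (Fin k) ℂ}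
    (hX : X.IsHermitian) (hY : Y.IsHermitian) (h : Y = unitaryConj U X) :
    eigVec Y hY = eigVec X hX :=
  eigVec_eq_of_charpoly_eq hY (eigVec_antitone hX) <| by
    rw [h, charpoly_unitaryConj, charpoly_eq_prod_eigVec hX]

theorem exists_eq_unitaryConj_realDiagonal_eigVec {X : Matrix (Fin k) (Fin k) ℂ}
    (hX : X.IsHermitian) :
    ∃ U : unitaryGroup (Fin k) ℂ, X = unitaryConj U (realDiagonal (eigVec X hX)) := by
  obtain ⟨U, hU⟩ := exists_unitaryConj_realDiagonal_comp_perm hX.eigenvectorUnitary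
    (Fin.revPerm.trans (Tuple.sort hX.eigenvalues))
  refine ⟨U, ?_⟩
  rw [eigVec_eq_comp, hU]
  exact hX.spectral_theorem

theorem exists_unitaryConj_eq_of_eigVec_eq {X Y : Matrix (Fin k) (Fin k) ℂ} (hX : X.IsHermitian)
    (hY : Y.IsHermitian) (h : eigVec X hX = eigVec Y hY) :
    ∃ U : unitaryGroup (Fin k) ℂ, unitaryConj U X = Y := by
  obtain ⟨V, hV⟩ := exists_eq_unitaryConj_realDiagonal_eigVec hX
  obtain ⟨W, hW⟩ := exists_eq_unitaryConj_realDiagonal_eigVec hY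
  refine ⟨W * V⁻¹, ?_⟩
  nth_rw 1 [hV]
  rw [← StarAlgEquiv.mul_apply, ← map_mul, inv_mul_cancel_right, h, ← hW]

theorem eigVec_realDiagonal {d : Fin k → ℝ} (hd : Antitone d) :
    eigVec (realDiagonal d) (isHermitian_realDiagonal d) = d :=
  eigVec_eq_of_charpoly_eq _ hd (charpoly_diagonal _)

theorem eigVec_neg {X : Matrix (Fin k) (Fin k) ℂ} (hX : X.IsHermitian) :
    eigVec (-X) hX.neg = starVec (eigVec X hX) := by
  obtain ⟨U, hU⟩ := exists_eq_unitaryConj_realDiagonal_eigVec hX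
  have hanti : Antitone (starVec (eigVec X hX)) :=
    fun _ _ hij => neg_le_neg (eigVec_antitone hX (Fin.rev_le_rev.2 hij))
  refine eigVec_eq_of_charpoly_eq _ hanti ?_
  nth_rw 1 [hU]
  rw [← map_neg, charpoly_unitaryConj, realDiagonal, diagonal_neg, charpoly_diagonal,
    ← Equiv.prod_comp Fin.revPerm]
  simp [starVec]

theorem eigVec_smul {X : Matrix (Fin k) (Fin k) ℂ} (hX : X.IsHermitian) {c : ℝ} (hc : 0 ≤ c)
    (hcX : ((c : ℂ) • X).IsHermitian) :
    eigVec ((c : ℂ) • X) hcX = c • eigVec X hX := by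
  obtain ⟨U, hU⟩ := exists_eq_unitaryConj_realDiagonal_eigVec hX
  have hanti : Antitone (c • eigVec X hX) := (eigVec_antitone hX).const_smul hc
  refine (eigVec_unitaryConj U (isHermitian_realDiagonal _) hcX ?_).trans
    (eigVec_realDiagonal hanti)
  nth_rw 1 [hU]
  rw [← map_smul, realDiagonal, realDiagonal, ← diagonal_smul]
  congr 2
  ext i
  simp

end Eigenvalues

section SingularValues

variable {p q : ℕ}

open scoped ComplexOrder in
theorem eigVec_conjTranspose_mul_self_nonneg (Y : Matrix (Fin p) (Fin q) ℂ) (i : Fin q) :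
    0 ≤ eigVec (Yᴴ * Y) (isHermitian_conjTranspose_mul_self Y) i :=
  (posSemidef_conjTranspose_mul_self Y).eigenvalues_nonneg _

theorem eigVec_mul_conjTranspose_self (hpq : q ≤ p) (Y : Matrix (Fin p) (Fin q) ℂ) (i : Fin p) :
    eigVec (Y * Yᴴ) (isHermitian_mul_conjTranspose_self Y) i =
      if h : (i : ℕ) < q then eigVec (Yᴴ * Y) (isHermitian_conjTranspose_mul_self Y) ⟨i, h⟩
      else 0 := by
  obtain ⟨r, rfl⟩ := Nat.exists_eq_add_of_le hpq
  refine congrFun (eigVec_eq_of_charpoly_eq _ (d := fun i : Fin (q + r) => if h : (i : ℕ) < q then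
    eigVec (Yᴴ * Y) (isHermitian_conjTranspose_mul_self Y) ⟨i, h⟩ else 0) ?_ ?_) i
  · intro i j hij
    have _ : (i : ℕ) ≤ j := hij
    dsimp only
    split_ifs with hj hi
    · exact eigVec_antitone _ hij
    · omega
    · exact eigVec_conjTranspose_mul_self_nonneg Y _
    · exact le_rfl
  · rw [charpoly_mul_comm_of_le _ _ (by simp),
      charpoly_eq_prod_eigVec (isHermitian_conjTranspose_mul_self Y), Fin.prod_univ_add]
    simp [mul_comm]

theorem sval_eq_sqrt (hpq : q ≤ p) (Y : Matrix (Fin p) (Fin q) ℂ) (i : Fin q) :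
    sval Y i = √(eigVec (Yᴴ * Y) (isHermitian_conjTranspose_mul_self Y) i) := by
  rw [sval, dif_pos (i.2.trans_le hpq), eigVec_mul_conjTranspose_self hpq, dif_pos i.2]

theorem sval_nonneg (hpq : q ≤ p) (Y : Matrix (Fin p) (Fin q) ℂ) (i : Fin q) : 0 ≤ sval Y i :=
  (Real.sqrt_nonneg _).trans_eq (sval_eq_sqrt hpq Y i).symm

theorem sval_antitone (hpq : q ≤ p) (Y : Matrix (Fin p) (Fin q) ℂ) :
    Antitone fun i : Fin q => sval Y i := by
  simp only [sval_eq_sqrt hpq]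
  exact fun _ _ hij => Real.sqrt_le_sqrt (eigVec_antitone _ hij)

theorem exists_sval_eq (hpq : q ≤ p) {s : Fin q → ℝ} (hs : Antitone s) (hs0 : ∀ i, 0 ≤ s i) :
    ∃ S : Matrix (Fin p) (Fin q) ℂ, (fun i : Fin q => sval S i) = s := by
  let S : Matrix (Fin p) (Fin q) ℂ :=
    (1 : Matrix (Fin p) (Fin p) ℂ).submatrix id (Fin.castLE hpq) * realDiagonal s
  have hS : Sᴴ * S = realDiagonal (s ^ 2) := by
    rw [conjTranspose_mul, conjTranspose_submatrix, conjTranspose_one, Matrix.mul_assoc,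
      ← Matrix.mul_assoc (submatrix _ _ _), ← submatrix_mul _ _ _ _ _ Function.bijective_id,
      Matrix.one_mul, submatrix_one _ (Fin.castLE_injective hpq), Matrix.one_mul,
      (isHermitian_realDiagonal s).eq, realDiagonal, realDiagonal, diagonal_mul_diagonal]
    simp [sq]
  have hanti : Antitone (s ^ 2) := fun i j hij => pow_le_pow_left₀ (hs0 j) (hs hij) 2
  refine ⟨S, funext fun i => ?_⟩
  rw [sval_eq_sqrt hpq, ← Real.sqrt_sq (hs0 i)]
  simp only [hS, eigVec_realDiagonal hanti, Pi.pow_apply]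

end SingularValues

section HermitianDilation

variable {p q : ℕ}

theorem isHermitian_hatM (Y : Matrix (Fin p) (Fin q) ℂ) : (hatM p q Y).IsHermitian := by
  have hblocks : (fromBlocks 0 Y Yᴴ 0 : Matrix (Fin p ⊕ Fin q) (Fin p ⊕ Fin q) ℂ).IsHermitian := by
    rw [IsHermitian, fromBlocks_conjTranspose, conjTranspose_zero, conjTranspose_zero,
      conjTranspose_conjTranspose]
  exact hblocks.submatrix _

theorem pow_mul_eval_charpoly_hatM (Y : Matrix (Fin p) (Fin q) ℂ) (t : ℂ) :
    t ^ q * (hatM p q Y).charpoly.eval t = t ^ p * (Yᴴ * Y).charpoly.eval (t ^ 2) := by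
  have hsub : scalar (Fin p ⊕ Fin q) t - fromBlocks 0 Y Yᴴ 0 =
      fromBlocks (scalar (Fin p) t) (-Y) (-Yᴴ) (scalar (Fin q) t) := by
    ext (i | i) (j | j) <;> simp [diagonal_apply]
  have hmul : (scalar (Fin p ⊕ Fin q) t - fromBlocks 0 Y Yᴴ 0) *
      fromBlocks (1 : Matrix (Fin p) (Fin p) ℂ) Y 0 (scalar (Fin q) t) =
      fromBlocks (scalar (Fin p) t) 0 (-Yᴴ) (scalar (Fin q) (t ^ 2) - Yᴴ * Y) := by
    rw [hsub, fromBlocks_multiply]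
    congr 1
    · simp
    · simp [← smul_eq_mul_diagonal, ← smul_eq_diagonal_mul]
    · simp
    · simp [pow_two, sub_eq_add_neg, add_comm]
  have hdet := congrArg det hmul
  rw [det_mul, det_fromBlocks_zero₂₁, det_fromBlocks_zero₁₂] at hdet
  simp only [scalar_apply, det_diagonal, Finset.prod_const, Finset.card_univ, Fintype.card_fin,
    det_one, one_mul] at hdet
  rw [hatM, charpoly_reindex, eval_charpoly, eval_charpoly, mul_comm, scalar_apply, hdet,
    scalar_apply]

theorem hatPQ_antitone {s : Fin q → ℝ} (hs : Antitone s) (hs0 : ∀ i, 0 ≤ s i) :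
    Antitone (hatPQ p q s) := by
  intro i j hij
  have _ : (i : ℕ) ≤ j := hij
  unfold hatPQ
  split_ifs with hj hi _ hjp hi hip hi
  · exact hs hij
  · omega
  · omega
  · exact hs0 _
  · exact le_rfl
  · omega
  · linarith [hs0 ⟨i, hi⟩, hs0 ⟨p + q - 1 - j, by omega⟩]
  · exact neg_nonpos.2 (hs0 _)
  · exact neg_le_neg (hs (Fin.mk_le_mk.2 (by omega)))

theorem pow_mul_prod_sub_hatPQ (hpq : q ≤ p) (s : Fin q → ℝ) (t : ℂ) :
    t ^ q * ∏ i, (t - hatPQ p q s i) = t ^ p * ∏ i, (t ^ 2 - s i ^ 2) := by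
  obtain ⟨r, rfl⟩ := Nat.exists_eq_add_of_le hpq
  have hfirst (i : Fin q) : hatPQ (q + r) q s (Fin.castAdd q (Fin.castAdd r i)) = s i := by
    simp [hatPQ]
  have hmiddle (i : Fin r) : hatPQ (q + r) q s (Fin.castAdd q (Fin.natAdd q i)) = 0 := by
    simp [hatPQ]
  have hlast (i : Fin q) : hatPQ (q + r) q s (Fin.natAdd (q + r) i.rev) = -s i := by
    rw [hatPQ, dif_neg (by simp; omega), dif_neg (by simp)]
    congr 2
    ext
    simp
    omega
  rw [Fin.prod_univ_add (a := q + r), Fin.prod_univ_add, ← Equiv.prod_comp Fin.revPerm fun i =>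
    t - (hatPQ (q + r) q s (Fin.natAdd (q + r) i) : ℂ)]
  simp only [hfirst, hmiddle, Fin.revPerm_apply, hlast, Complex.ofReal_zero, sub_zero,
    Complex.ofReal_neg, sub_neg_eq_add, Finset.prod_const, Finset.card_univ, Fintype.card_fin,
    sq_sub_sq, Finset.prod_mul_distrib]
  ring

theorem eigVec_hatM (hpq : q ≤ p) (Y : Matrix (Fin p) (Fin q) ℂ) :
    eigVec (hatM p q Y) (isHermitian_hatM Y) = hatPQ p q fun i => sval Y i := by
  refine eigVec_eq_of_charpoly_eq _
    (hatPQ_antitone (sval_antitone hpq Y) (sval_nonneg hpq Y)) ?_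
  refine mul_left_cancel₀ (pow_ne_zero q Polynomial.X_ne_zero) (Polynomial.funext fun t => ?_)
  have hsq (i : Fin q) : (eigVec (Yᴴ * Y) (isHermitian_conjTranspose_mul_self Y) i : ℂ) =
      (sval Y i : ℂ) ^ 2 := by
    rw [sval_eq_sqrt hpq, ← Complex.ofReal_pow,
      Real.sq_sqrt (eigVec_conjTranspose_mul_self_nonneg Y i)]
  simp only [Polynomial.eval_mul, Polynomial.eval_pow, Polynomial.eval_X, Polynomial.eval_prod,
    Polynomial.eval_sub, Polynomial.eval_C]
  rw [pow_mul_eval_charpoly_hatM, pow_mul_prod_sub_hatPQ hpq,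
    charpoly_eq_prod_eigVec (isHermitian_conjTranspose_mul_self Y)]
  simp only [Polynomial.eval_X, Polynomial.eval_prod, Polynomial.eval_sub, Polynomial.eval_C, hsq]

theorem isHermitian_two_smul_hatM (Y : Matrix (Fin p) (Fin q) ℂ) :
    ((2 : ℂ) • hatM p q Y).IsHermitian := by
  rw [IsHermitian, conjTranspose_smul, (isHermitian_hatM Y).eq, star_ofNat]

theorem eigVec_two_smul_hatM (hpq : q ≤ p) (Y : Matrix (Fin p) (Fin q) ℂ) :
    eigVec ((2 : ℂ) • hatM p q Y) (isHermitian_two_smul_hatM Y) =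
      fun i => 2 * hatPQ p q (fun i => sval Y i) i := by
  rw [← eigVec_hatM hpq]
  exact eigVec_smul (isHermitian_hatM Y) zero_le_two (by exact_mod_cast isHermitian_two_smul_hatM Y)

end HermitianDilation

section BlockSignature

variable {p q : ℕ}

/-- The matrix `diag(I_p, -I_q)`, whose conjugation action changes the sign of the off-diagonal
blocks. -/
def blockSignature (p q : ℕ) : unitaryGroup (Fin (p + q)) ℂ :=
  ⟨reindex finSumFinEquiv finSumFinEquiv (fromBlocks 1 0 0 (-1)), by
    simp [mem_unitaryGroup_iff, star_eq_conjTranspose, conjTranspose_submatrix,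
      fromBlocks_conjTranspose, submatrix_mul_equiv, fromBlocks_multiply]⟩

theorem unitaryConj_blockSignature_fromBlocks (A : Matrix (Fin p) (Fin p) ℂ)
    (B : Matrix (Fin p) (Fin q) ℂ) (C : Matrix (Fin q) (Fin p) ℂ) (D : Matrix (Fin q) (Fin q) ℂ) :
    unitaryConj (blockSignature p q)
        (reindex finSumFinEquiv finSumFinEquiv (fromBlocks A B C D)) =
      reindex finSumFinEquiv finSumFinEquiv (fromBlocks A (-B) (-C) D) := by
  simp [unitaryConj_apply, blockSignature, star_eq_conjTranspose, conjTranspose_submatrix,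
    fromBlocks_conjTranspose, submatrix_mul_equiv, fromBlocks_multiply]

theorem unitaryConj_blockSignature_hatM (Y : Matrix (Fin p) (Fin q) ℂ) :
    unitaryConj (blockSignature p q) (hatM p q Y) = -hatM p q Y := by
  rw [hatM, unitaryConj_blockSignature_fromBlocks]
  ext i j
  refine Fin.addCases (fun i => ?_) (fun i => ?_) i <;>
    refine Fin.addCases (fun j => ?_) (fun j => ?_) j <;> simp

theorem involutive_unitaryConj_blockSignature :
    Function.Involutive (unitaryConj (blockSignature p q)) := by
  intro X
  obtain ⟨Z, rfl⟩ := (reindex finSumFinEquiv finSumFinEquiv).surjective X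
  rw [← fromBlocks_toBlocks Z, unitaryConj_blockSignature_fromBlocks,
    unitaryConj_blockSignature_fromBlocks, neg_neg, neg_neg]

theorem sub_unitaryConj_blockSignature {X : Matrix (Fin (p + q)) (Fin (p + q)) ℂ}
    (hX : X.IsHermitian) :
    X - unitaryConj (blockSignature p q) X = (2 : ℂ) • hatM p q (blockTR p q X) := by
  obtain ⟨Z, rfl⟩ := (reindex finSumFinEquiv finSumFinEquiv).surjective X
  have hZ : Z.toBlocks₂₁ = Z.toBlocks₁₂ᴴ := by
    ext i j
    simpa [toBlocks₂₁, toBlocks₁₂] using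
      (hX.apply (finSumFinEquiv (Sum.inr i)) (finSumFinEquiv (Sum.inl j))).symm
  have hblock : blockTR p q (reindex finSumFinEquiv finSumFinEquiv Z) = Z.toBlocks₁₂ := by
    ext i j
    simp [blockTR, toBlocks₁₂]
  rw [hblock, hatM, ← hZ]
  nth_rw 1 2 [← fromBlocks_toBlocks Z]
  rw [unitaryConj_blockSignature_fromBlocks]
  ext i j
  refine Fin.addCases (fun i => ?_) (fun i => ?_) i <;>
    refine Fin.addCases (fun j => ?_) (fun j => ?_) j <;> simp [two_mul]

end BlockSignature

section HornCone

variable {p q : ℕ}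

theorem mem_horn_of_mem_coneA (hpq : q ≤ p) {lam : Fin (p + q) → ℝ} {s : Fin q → ℝ}
    (h : (lam, s) ∈ coneA p q) :
    (lam, starVec lam, fun i => 2 * hatPQ p q s i) ∈ Horn (p + q) := by
  obtain ⟨X, hX, hlam, hs⟩ := h
  obtain rfl : lam = eigVec X hX := hlam
  obtain rfl : s = fun i : Fin q => sval (blockTR p q X) i := funext hs
  have hθX : (unitaryConj (blockSignature p q) X).IsHermitian :=
    hX.isSelfAdjoint.map (unitaryConj (blockSignature p q))
  refine ⟨X, -unitaryConj (blockSignature p q) X, hX, hθX.neg, rfl, ?_, ?_⟩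
  · rw [eigVec_neg hθX, eigVec_unitaryConj _ hX hθX rfl]
  · refine ((eigVec_congr _ _ ?_).trans (eigVec_two_smul_hatM hpq _)).symm
    rw [← sub_eq_add_neg, sub_unitaryConj_blockSignature hX]

theorem eq_of_two_mul_hatPQ_eq (hpq : q ≤ p) {s t : Fin q → ℝ}
    (h : ∀ i, 2 * hatPQ p q s i = 2 * hatPQ p q t i) : s = t :=
  funext fun i => by simpa [hatPQ] using h (Fin.castAdd q (Fin.castLE hpq i))

theorem mem_coneA_of_mem_horn (hpq : q ≤ p) {lam : Fin (p + q) → ℝ} {s : Fin q → ℝ}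
    (hs : Antitone s) (hs0 : ∀ i, 0 ≤ s i)
    (h : (lam, starVec lam, fun i => 2 * hatPQ p q s i) ∈ Horn (p + q)) :
    (lam, s) ∈ coneA p q := by
  obtain ⟨X, Y, hX, hY, hlam, hstar, hsum⟩ := h
  obtain rfl : lam = eigVec X hX := hlam
  obtain ⟨S, rfl⟩ := exists_sval_eq hpq hs hs0
  obtain ⟨b, rfl⟩ := exists_unitaryConj_eq_of_eigVec_eq hX.neg hY ((eigVec_neg hX).trans hstar)
  obtain ⟨c, hc⟩ := exists_unitaryConj_eq_of_eigVec_eq (hX.add hY) (isHermitian_two_smul_hatM S)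
    (hsum.symm.trans (eigVec_two_smul_hatM hpq S).symm)
  set J := blockSignature p q
  have hdiff : unitaryConj c X - unitaryConj (c * b * J⁻¹) (unitaryConj J X) =
      (2 : ℂ) • hatM p q S := by
    rw [← hc, map_add, map_neg, map_neg, ← sub_eq_add_neg, ← StarAlgEquiv.mul_apply,
      ← StarAlgEquiv.mul_apply, ← map_mul, ← map_mul, inv_mul_cancel_right]
  obtain ⟨u, k, huk⟩ := exists_unitaryConj_sub_map_unitaryConj_eq
    involutive_unitaryConj_blockSignature hX (isHermitian_two_smul_hatM S)
    (by rw [map_smul, unitaryConj_blockSignature_hatM, smul_neg]) hdiff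
  have huX : (unitaryConj u X).IsHermitian := hX.isSelfAdjoint.map (unitaryConj u)
  refine ⟨unitaryConj u X, huX, (eigVec_unitaryConj u hX huX rfl).symm, ?_⟩
  refine congrFun (eq_of_two_mul_hatPQ_eq hpq (congrFun ?_))
  rw [← eigVec_two_smul_hatM hpq, ← eigVec_two_smul_hatM hpq]
  refine (eigVec_unitaryConj k (isHermitian_two_smul_hatM S) _ ?_).symm
  rw [← sub_unitaryConj_blockSignature huX, huk]

end HornCone

theorem stmt_1 (p q : ℕ) (hq : 1 ≤ q) (hpq : q ≤ p)
    (lam : Fin (p + q) → ℝ) (hlam : Antitone lam)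
    (s : Fin q → ℝ) (hs : Antitone s) (hs0 : ∀ i, 0 ≤ s i) :
    (lam, s) ∈ coneA p q ↔
      (lam, starVec lam, fun i => 2 * hatPQ p q s i) ∈ Horn (p + q) :=
  ⟨mem_horn_of_mem_coneA hpq, mem_coneA_of_mem_horn hpq hs hs0⟩
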